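/- Let α > 0, θ∞ > 0, u∞ ∈ ℝ, R₀ > 0, L₀ > 0 and T₀ > 0. There exist a constant δ₀ ∈ (0,1], depending only on α and θ∞, and a constant C₀ > 0, depending on α, θ∞, u∞ and R₀ but independent of L₀, such that the following holds. Let E : [0,T₀] × [0,∞) → ℝ be C¹ with sup( |E| + |∂_x E| ) ≤ δ₀, let F̂ : [0,T₀] × [0,∞) × ℝ³ → ℝ be C¹, and suppose f : [0,T₀] × [0,∞) × ℝ³ → ℝ is C², solves ∂_t f + ξ₁ ∂_x f + E ∂_{ξ₁} f − ((ξ₁ − u∞)/(2θ∞)) E f = F̂, vanishes together with ∇_{x,ξ} f on a neighborhood of the boundary set {(x,ξ) : x = 0, ξ₁ ≥ 0}, is supported in { −L₀ ≤ ξ₁ ≤ R₀ }, and is such that all the integrals below are finite. Then, writing ‖g(t)‖²_{H¹} := ∫₀^∞ ∫_{ℝ³} ( |g|² + |∇_{x,ξ} g|² )(t,x,ξ) dξ dx, for every t ∈ [0,T₀]: ‖e^{αx/2} f(t)‖²_{H¹} + (α/2) Σ_{k=0}^{1} ∫₀^t e^{C₀(t−τ)} ∫₀^∞ ∫_{{ξ₁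 < 0}} |ξ₁| |∇_{x,ξ}^k (e^{αx/2} f)(τ,x,ξ)|² dξ dx dτ ≤ e^{C₀ t} ‖e^{αx/2} f(0)‖²_{H¹} + ∫₀^t e^{C₀(t−τ)} ‖e^{αx/2} F̂(τ)‖²_{H¹} dτ. -/

import Mathlib

open MeasureTheory Real Set Filter

/-- The squared weighted `H¹_{x,ξ}` norm `‖e^{αx/2} g‖²_{H¹}` over the half-space,
with gradient in `(x,ξ)`. -/
noncomputable def wH1 (α : ℝ) (g : ℝ → ℝ × ℝ × ℝ → ℝ) : ENNReal :=
  ∫⁻ x in Set.Ioi (0:ℝ), ∫⁻ ξ : ℝ × ℝ × ℝ, ENNReal.ofReal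
    ((Real.exp (α * x / 2) * g x ξ)^2 +
      ‖fderiv ℝ (fun p : ℝ × (ℝ × ℝ × ℝ) =>
        Real.exp (α * p.1 / 2) * g p.1 p.2) (x, ξ)‖^2)

/-- The weighted dissipation `Σ_{k=0}^{1} ∫∫_{ξ₁<0} |ξ₁| |∇^k_{x,ξ}(e^{αx/2}g)|²`. -/
noncomputable def wDiss (α : ℝ) (g : ℝ → ℝ × ℝ × ℝ → ℝ) : ENNReal :=
  ∫⁻ x in Set.Ioi (0:ℝ), ∫⁻ ξ in {ξ : ℝ × ℝ × ℝ | ξ.1 < 0}, ENNReal.ofReal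
    (|ξ.1| * ((Real.exp (α * x / 2) * g x ξ)^2 +
      ‖fderiv ℝ (fun p : ℝ × (ℝ × ℝ × ℝ) =>
        Real.exp (α * p.1 / 2) * g p.1 p.2) (x, ξ)‖^2))

/-!
Set `g = e^{αx/2} f`. The weight turns the transport term `ξ₁ ∂ₓ` into the additional growth rate
`αξ₁/2`: it is bounded above because `ξ₁ ≤ R₀` on the support, and for `ξ₁ < 0` it is a damping of
strength proportional to `|ξ₁|`. Since the field is small, the terms it contributes that grow
linearly in `ξ₁` use up only part of this damping, so neither the rate `C₀` nor the remaining
dissipation sees a lower bound for the velocities. Commuting `∇_{x,ξ}` with the equation produces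
multiples of `g`, `∂ₓg` and `∂_{ξ₁}g`; among their coefficients only `(ξ₁ - u∞) ∂ₓE / (2θ∞)` is
unbounded, and the damping absorbs it in the same way.

The norm of the gradient for the supremum norm on `ℝ × ℝ³` is its `ℓ¹` norm, so the energy density
`g² + (∑ᵢ |∂ᵢg|)²` is not differentiable; it is regularized by replacing `|y|` with
`√(y² + ε²) - ε`, and `ε → 0` is taken after integration. To have finite integrals, the density is
multiplied by a cutoff that decreases along the trajectories, because its support recedes faster
than they move. At `x = 0` the density vanishes for incoming velocities and the flux of outgoing
ones has a favourable sign, so integrating over boxes exhausting the half-space leaves no boundary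
term.
-/

/-! ### Integration along the transport field -/

section Transport

/-- The transport field `∂_t + v ∂_x + E ∂_v` of the Vlasov equation at the point `(t, x, v, η)`,
where the tangential velocity `η` is not accelerated. -/
def vlasovField {Y : Type*} [Zero Y] (E : ℝ → ℝ → ℝ) (z : ℝ × ℝ × ℝ × Y) : ℝ × ℝ × ℝ × Y :=
  (1, z.2.2.1, E z.1 z.2.1, 0)

section ProductIntegrals

variable {V W : Type*} [MetricSpace V] [ProperSpace V] [MeasureSpace V] [BorelSpace V]
  [IsFiniteMeasureOnCompacts (volume : Measure V)]
  [MetricSpace W] [ProperSpace W] [MeasureSpace W] [BorelSpace W]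
  [IsFiniteMeasureOnCompacts (volume : Measure W)]

lemma integrableOn_of_continuous_of_isBounded {φ : V → ℝ} {s : Set V} (hφ : Continuous φ)
    (hs : Bornology.IsBounded s) : IntegrableOn φ s :=
  (hφ.continuousOn.integrableOn_compact hs.isCompact_closure).mono_set subset_closure

lemma setIntegral_prod_nonneg {φ : V × W → ℝ} {s : Set V} {r : Set W} (hφ : Continuous φ)
    (hs : Bornology.IsBounded s) (hsm : MeasurableSet s) (hr : Bornology.IsBounded r)
    (h : ∀ y ∈ s, 0 ≤ ∫ w in r, φ (y, w)) : 0 ≤ ∫ z in s ×ˢ r, φ z := by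
  rw [Measure.volume_eq_prod,
    setIntegral_prod _ (integrableOn_of_continuous_of_isBounded hφ (hs.prod hr))]
  exact setIntegral_nonneg hsm h

variable {φ φ' : ℝ × V → ℝ} {a b : ℝ} {s : Set V}

lemma setIntegral_partialDeriv_eq_sub (hab : a ≤ b) (hs : Bornology.IsBounded s)
    (hφ' : Continuous φ')
    (hderiv : ∀ t y, HasDerivAt (fun t => φ (t, y)) (φ' (t, y)) t) :
    ∫ z in Ioo a b ×ˢ s, φ' z = ∫ y in s, (φ (b, y) - φ (a, y)) := by
  have hint : IntegrableOn φ' (Ioo a b ×ˢ s) :=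
    integrableOn_of_continuous_of_isBounded hφ' ((Metric.isBounded_Ioo a b).prod hs)
  rw [IntegrableOn, Measure.volume_eq_prod, ← Measure.prod_restrict] at hint
  rw [Measure.volume_eq_prod, ← Measure.prod_restrict, integral_prod_symm _ hint]
  congr 1 with y
  rw [← integral_Ioc_eq_integral_Ioo, ← intervalIntegral.integral_of_le hab]
  exact intervalIntegral.integral_eq_sub_of_hasDerivAt (fun t _ => hderiv t y)
    (Continuous.intervalIntegrable (by fun_prop) a b)

lemma setIntegral_partialDeriv_nonneg (hab : a ≤ b) (hs : Bornology.IsBounded s)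
    (hsm : MeasurableSet s) (hφ' : Continuous φ')
    (hderiv : ∀ t y, HasDerivAt (fun t => φ (t, y)) (φ' (t, y)) t)
    (hle : ∀ y ∈ s, φ (a, y) ≤ φ (b, y)) : 0 ≤ ∫ z in Ioo a b ×ˢ s, φ' z := by
  rw [setIntegral_partialDeriv_eq_sub hab hs hφ' hderiv]
  exact setIntegral_nonneg hsm fun y hy => sub_nonneg.2 (hle y hy)

end ProductIntegrals

section PartialDerivatives

variable {Y : Type*} [NormedAddCommGroup Y] [NormedSpace ℝ Y] {Φ : ℝ × ℝ × ℝ × Y → ℝ}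

lemma fderiv_vlasovField_eq (E : ℝ → ℝ → ℝ) (z : ℝ × ℝ × ℝ × Y) :
    fderiv ℝ Φ z (vlasovField E z) = fderiv ℝ Φ z (1, 0) +
      (z.2.2.1 * fderiv ℝ Φ z (0, 1, 0) + E z.1 z.2.1 * fderiv ℝ Φ z (0, 0, 1, 0)) := by
  have hsplit : vlasovField E z =
      (1, 0) + (z.2.2.1 • (0, 1, 0) + E z.1 z.2.1 • (0, 0, 1, 0)) := by simp [vlasovField]
  rw [hsplit]
  simp only [map_add, map_smul, smul_eq_mul]

lemma continuous_fderiv_apply (hΦ : ContDiff ℝ 1 Φ) (w : ℝ × ℝ × ℝ × Y) :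
    Continuous fun z => fderiv ℝ Φ z w :=
  (hΦ.continuous_fderiv one_ne_zero).clm_apply continuous_const

lemma hasDerivAt_time (hΦ : Differentiable ℝ Φ) (t : ℝ) (p : ℝ × ℝ × Y) :
    HasDerivAt (fun s => Φ (s, p)) (fderiv ℝ Φ (t, p) (1, 0)) t :=
  HasFDerivAt.comp_hasDerivAt (l := Φ) t (hΦ (t, p)).hasFDerivAt
    ((hasDerivAt_id t).prodMk (hasDerivAt_const t p))

lemma hasDerivAt_position (hΦ : Differentiable ℝ Φ) (t x : ℝ) (ξ : ℝ × Y) :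
    HasDerivAt (fun y => Φ (t, y, ξ)) (fderiv ℝ Φ (t, x, ξ) (0, 1, 0)) x :=
  HasFDerivAt.comp_hasDerivAt (l := Φ) x (hΦ (t, x, ξ)).hasFDerivAt
    ((hasDerivAt_const x t).prodMk ((hasDerivAt_id x).prodMk (hasDerivAt_const x ξ)))

lemma hasDerivAt_velocity (hΦ : Differentiable ℝ Φ) (t x v : ℝ) (η : Y) :
    HasDerivAt (fun w => Φ (t, x, w, η)) (fderiv ℝ Φ (t, x, v, η) (0, 0, 1, 0)) v :=
  HasFDerivAt.comp_hasDerivAt (l := Φ) v (hΦ (t, x, v, η)).hasFDerivAt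
    ((hasDerivAt_const v t).prodMk ((hasDerivAt_const v x).prodMk
      ((hasDerivAt_id v).prodMk (hasDerivAt_const v η))))

end PartialDerivatives

/-- A box in phase space: `(0, X)` in position, `(-M, M)` in the first velocity and `S` in the
tangential velocities. -/
def phaseBox {Y : Type*} (X M : ℝ) (S : Set Y) : Set (ℝ × ℝ × Y) := Ioo 0 X ×ˢ Ioo (-M) M ×ˢ S

lemma isBounded_phaseBox {Y : Type*} [PseudoMetricSpace Y] {S : Set Y} (X M : ℝ)
    (hS : Bornology.IsBounded S) : Bornology.IsBounded (phaseBox X M S) :=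
  (Metric.isBounded_Ioo _ _).prod ((Metric.isBounded_Ioo _ _).prod hS)

lemma measurableSet_phaseBox {Y : Type*} [MeasurableSpace Y] {S : Set Y} (X M : ℝ)
    (hS : MeasurableSet S) : MeasurableSet (phaseBox X M S) :=
  measurableSet_Ioo.prod (measurableSet_Ioo.prod hS)

variable {Y : Type*} [NormedAddCommGroup Y] [NormedSpace ℝ Y] [ProperSpace Y] [MeasureSpace Y]
  [BorelSpace Y] [IsFiniteMeasureOnCompacts (volume : Measure Y)]
  {E : ℝ → ℝ → ℝ} {T X M : ℝ} {S : Set Y} {Φ K R : ℝ × ℝ × ℝ × Y → ℝ}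

lemma setIntegral_position_flux_nonneg (hΦ : ContDiff ℝ 1 Φ) (hX : 0 ≤ X)
    (hS : Bornology.IsBounded S) (hSm : MeasurableSet S)
    (hflux : ∀ t ∈ Ioo 0 T, ∀ ξ ∈ Ioo (-M) M ×ˢ S, ξ.1 * Φ (t, 0, ξ) ≤ ξ.1 * Φ (t, X, ξ)) :
    0 ≤ ∫ z in Ioo 0 T ×ˢ phaseBox X M S, z.2.2.1 * fderiv ℝ Φ z (0, 1, 0) := by
  have hcont : Continuous fun z : ℝ × ℝ × ℝ × Y => z.2.2.1 * fderiv ℝ Φ z (0, 1, 0) :=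
    Continuous.mul (by fun_prop) (continuous_fderiv_apply hΦ _)
  refine setIntegral_prod_nonneg hcont (Metric.isBounded_Ioo _ _) measurableSet_Ioo
    (isBounded_phaseBox X M hS) fun t ht => ?_
  exact setIntegral_partialDeriv_nonneg (φ := fun p => p.2.1 * Φ (t, p)) hX
    ((Metric.isBounded_Ioo _ _).prod hS) (measurableSet_Ioo.prod hSm) (by fun_prop)
    (fun x ξ => (hasDerivAt_position (hΦ.differentiable one_ne_zero) t x ξ).const_mul ξ.1)
    (hflux t ht)

lemma setIntegral_velocity_flux_nonneg (hE : Continuous fun p : ℝ × ℝ => E p.1 p.2)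
    (hΦ : ContDiff ℝ 1 Φ) (hM : 0 ≤ M) (hS : Bornology.IsBounded S) (hSm : MeasurableSet S)
    (hflux : ∀ t ∈ Ioo 0 T, ∀ x ∈ Ioo 0 X, ∀ η ∈ S,
      E t x * Φ (t, x, -M, η) ≤ E t x * Φ (t, x, M, η)) :
    0 ≤ ∫ z in Ioo 0 T ×ˢ phaseBox X M S, E z.1 z.2.1 * fderiv ℝ Φ z (0, 0, 1, 0) := by
  have hcont : Continuous fun z : ℝ × ℝ × ℝ × Y => E z.1 z.2.1 * fderiv ℝ Φ z (0, 0, 1, 0) :=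
    (hE.comp (by fun_prop : Continuous fun z : ℝ × ℝ × ℝ × Y => (z.1, z.2.1))).mul
      (continuous_fderiv_apply hΦ _)
  refine setIntegral_prod_nonneg hcont (Metric.isBounded_Ioo _ _) measurableSet_Ioo
    (isBounded_phaseBox X M hS) fun t ht => ?_
  refine setIntegral_prod_nonneg (hcont.comp (Continuous.prodMk_right t))
    (Metric.isBounded_Ioo _ _) measurableSet_Ioo ((Metric.isBounded_Ioo _ _).prod hS)
    fun x hx => ?_
  exact setIntegral_partialDeriv_nonneg (φ := fun ξ => E t x * Φ (t, x, ξ)) (by linarith) hS hSm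
    (hcont.comp ((Continuous.prodMk_right t).comp (Continuous.prodMk_right x)))
    (fun v η => (hasDerivAt_velocity (hΦ.differentiable one_ne_zero) t x v η).const_mul (E t x))
    (hflux t ht x hx)

lemma setIntegral_le_of_fderiv_vlasovField_le (hE : Continuous fun p : ℝ × ℝ => E p.1 p.2)
    (hΦ : ContDiff ℝ 1 Φ) (hK : Continuous K) (hT : 0 ≤ T) (hX : 0 ≤ X) (hM : 0 ≤ M)
    (hS : Bornology.IsBounded S) (hSm : MeasurableSet S)
    (hflux_x : ∀ t ∈ Ioo 0 T, ∀ ξ ∈ Ioo (-M) M ×ˢ S, ξ.1 * Φ (t, 0, ξ) ≤ ξ.1 * Φ (t, X, ξ))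
    (hflux_v : ∀ t ∈ Ioo 0 T, ∀ x ∈ Ioo 0 X, ∀ η ∈ S,
      E t x * Φ (t, x, -M, η) ≤ E t x * Φ (t, x, M, η))
    (hle : ∀ z ∈ Ioo 0 T ×ˢ phaseBox X M S, fderiv ℝ Φ z (vlasovField E z) ≤ K z) :
    ∫ p in phaseBox X M S, Φ (T, p) ≤
      (∫ p in phaseBox X M S, Φ (0, p)) + ∫ z in Ioo 0 T ×ˢ phaseBox X M S, K z := by
  have hΦc := hΦ.continuous
  have hΦ' := continuous_fderiv_apply hΦ
  have hbox := isBounded_phaseBox X M hS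
  have hint {g : ℝ × ℝ × ℝ × Y → ℝ} (hg : Continuous g) :
      IntegrableOn g (Ioo 0 T ×ˢ phaseBox X M S) :=
    integrableOn_of_continuous_of_isBounded hg ((Metric.isBounded_Ioo _ _).prod hbox)
  have htime : ∫ z in Ioo 0 T ×ˢ phaseBox X M S, fderiv ℝ Φ z (1, 0) =
      (∫ p in phaseBox X M S, Φ (T, p)) - ∫ p in phaseBox X M S, Φ (0, p) := by
    rw [setIntegral_partialDeriv_eq_sub hT hbox (hΦ' _)
      (hasDerivAt_time (hΦ.differentiable one_ne_zero)), integral_sub]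
    all_goals exact integrableOn_of_continuous_of_isBounded (by fun_prop) hbox
  have hfield : ∫ z in Ioo 0 T ×ˢ phaseBox X M S, fderiv ℝ Φ z (vlasovField E z) ≤
      ∫ z in Ioo 0 T ×ˢ phaseBox X M S, K z := by
    refine setIntegral_mono_on (hint ?_) (hint hK)
      (measurableSet_Ioo.prod (measurableSet_phaseBox X M hSm)) hle
    simp only [fderiv_vlasovField_eq]
    fun_prop
  simp only [fderiv_vlasovField_eq] at hfield
  rw [integral_add (hint (by fun_prop)) (hint (by fun_prop)),
    integral_add (hint (by fun_prop)) (hint (by fun_prop)), htime] at hfield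
  linarith [setIntegral_position_flux_nonneg hΦ hX hS hSm hflux_x,
    setIntegral_velocity_flux_nonneg hE hΦ hM hS hSm hflux_v]

lemma setIntegral_le_of_inflow_eq_zero (hE : Continuous fun p : ℝ × ℝ => E p.1 p.2)
    (hΦ : ContDiff ℝ 1 Φ) (hK : Continuous K) (hT : 0 ≤ T) (hX : 0 ≤ X) (hM : 0 ≤ M)
    (hS : Bornology.IsBounded S) (hSm : MeasurableSet S)
    (hnonneg : ∀ t ∈ Ioo 0 T, ∀ ξ, 0 ≤ Φ (t, 0, ξ))
    (hinflow : ∀ t ∈ Ioo 0 T, ∀ ξ, 0 ≤ ξ.1 → Φ (t, 0, ξ) = 0)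
    (hfar : ∀ t ∈ Ioo 0 T, ∀ ξ, Φ (t, X, ξ) = 0)
    (hfast : ∀ t ∈ Ioo 0 T, ∀ x v η, |v| = M → Φ (t, x, v, η) = 0)
    (hle : ∀ z ∈ Ioo 0 T ×ˢ phaseBox X M S, fderiv ℝ Φ z (vlasovField E z) ≤ K z) :
    ∫ p in phaseBox X M S, Φ (T, p) ≤
      (∫ p in phaseBox X M S, Φ (0, p)) + ∫ z in Ioo 0 T ×ˢ phaseBox X M S, K z := by
  refine setIntegral_le_of_fderiv_vlasovField_le hE hΦ hK hT hX hM hS hSm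
    (fun t ht ξ _ => ?_) (fun t ht x _ η _ => ?_) hle
  · rw [hfar t ht, mul_zero]
    rcases le_total 0 ξ.1 with hξ | hξ
    · rw [hinflow t ht ξ hξ, mul_zero]
    · exact mul_nonpos_of_nonpos_of_nonneg hξ (hnonneg t ht ξ)
  · rw [hfast t ht x (-M) η (by rw [abs_neg, abs_of_nonneg hM]),
      hfast t ht x M η (abs_of_nonneg hM)]

lemma le_of_forall_pos_le_add_mul {a b c : ℝ} (h : ∀ ε > 0, a ≤ b + ε * c) : a ≤ b := by
  have hcont : Continuous fun ε : ℝ => b + ε * c := by fun_prop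
  have hlim : Tendsto (fun ε : ℝ => b + ε * c) (nhdsWithin 0 (Ioi 0)) (nhds b) := by
    simpa using (hcont.tendsto 0).mono_left nhdsWithin_le_nhds
  exact ge_of_tendsto hlim (eventually_mem_nhdsWithin.mono h)

lemma setIntegral_le_of_forall_exists_approx (hE : Continuous fun p : ℝ × ℝ => E p.1 p.2)
    (hΦ : Continuous Φ) (hK : Continuous K) (hR : Continuous R)
    (hT : 0 ≤ T) (hX : 0 ≤ X) (hM : 0 ≤ M) (hS : Bornology.IsBounded S) (hSm : MeasurableSet S)
    (hinflow : ∀ t ∈ Ioo 0 T, ∀ ξ, 0 ≤ ξ.1 → Φ (t, 0, ξ) = 0)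
    (hfar : ∀ t ∈ Ioo 0 T, ∀ ξ, Φ (t, X, ξ) = 0)
    (hfast : ∀ t ∈ Ioo 0 T, ∀ x v η, |v| = M → Φ (t, x, v, η) = 0)
    (happrox : ∀ ε > 0, ∃ Ψ : ℝ × ℝ × ℝ × Y → ℝ, ContDiff ℝ 1 Ψ ∧
      (∀ z, 0 ≤ Ψ z ∧ Ψ z ≤ Φ z ∧ Φ z ≤ Ψ z + ε * R z) ∧
      ∀ z ∈ Ioo 0 T ×ˢ phaseBox X M S, fderiv ℝ Ψ z (vlasovField E z) ≤ K z + ε * R z) :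
    ∫ p in phaseBox X M S, Φ (T, p) ≤
      (∫ p in phaseBox X M S, Φ (0, p)) + ∫ z in Ioo 0 T ×ˢ phaseBox X M S, K z := by
  have hbox := isBounded_phaseBox X M hS
  have hboxm := measurableSet_phaseBox X M hSm
  have hint {g : ℝ × ℝ × ℝ × Y → ℝ} (hg : Continuous g) (t : ℝ) :
      IntegrableOn (fun p => g (t, p)) (phaseBox X M S) :=
    integrableOn_of_continuous_of_isBounded (hg.comp (Continuous.prodMk_right t)) hbox
  refine le_of_forall_pos_le_add_mul (c := (∫ p in phaseBox X M S, R (T, p)) +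
    ∫ z in Ioo 0 T ×ˢ phaseBox X M S, R z) fun ε hε => ?_
  obtain ⟨Ψ, hΨ, hΨΦ, hDΨ⟩ := happrox ε hε
  have hzero {z} (hz : Φ z = 0) : Ψ z = 0 := le_antisymm ((hΨΦ z).2.1.trans_eq hz) (hΨΦ z).1
  have hinitial : ∫ p in phaseBox X M S, Ψ (0, p) ≤ ∫ p in phaseBox X M S, Φ (0, p) :=
    setIntegral_mono_on (hint hΨ.continuous 0) (hint hΦ 0) hboxm fun p _ =>
      (hΨΦ (0, p)).2.1
  have hfinal : ∫ p in phaseBox X M S, Φ (T, p) ≤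
      (∫ p in phaseBox X M S, Ψ (T, p)) + ε * ∫ p in phaseBox X M S, R (T, p) := by
    rw [← integral_const_mul, ← integral_add (hint hΨ.continuous T) ((hint hR T).const_mul ε)]
    exact setIntegral_mono_on (hint hΦ T)
      ((hint hΨ.continuous T).add ((hint hR T).const_mul ε)) hboxm fun p _ => (hΨΦ (T, p)).2.2
  have hΨle := setIntegral_le_of_inflow_eq_zero (K := fun z => K z + ε * R z) hE hΨ (by fun_prop)
    hT hX hM hS hSm (fun t _ ξ => (hΨΦ (t, 0, ξ)).1)
    (fun t ht ξ hξ => hzero (hinflow t ht ξ hξ)) (fun t ht ξ => hzero (hfar t ht ξ))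
    (fun t ht x v η hv => hzero (hfast t ht x v η hv)) hDΨ
  have hintQ {g : ℝ × ℝ × ℝ × Y → ℝ} (hg : Continuous g) :
      IntegrableOn g (Ioo 0 T ×ˢ phaseBox X M S) :=
    integrableOn_of_continuous_of_isBounded hg ((Metric.isBounded_Ioo _ _).prod hbox)
  rw [integral_add (hintQ hK) ((hintQ hR).const_mul ε), integral_const_mul] at hΨle
  linarith

end Transport

/-! ### Regularized energy densities of a function and its gradient -/

section JetEnergy

/-- A `C¹` regularization of the absolute value that vanishes at the origin. -/
noncomputable def smoothAbs (ε y : ℝ) : ℝ := √(y ^ 2 + ε ^ 2) - ε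

/-- The derivative of `smoothAbs ε`, a regularization of the sign function. -/
noncomputable def smoothSign (ε y : ℝ) : ℝ := y / √(y ^ 2 + ε ^ 2)

variable {ε : ℝ}

lemma sqrt_sq_add_sq_pos (hε : 0 < ε) (y : ℝ) : 0 < √(y ^ 2 + ε ^ 2) :=
  Real.sqrt_pos.2 (by positivity)

lemma abs_le_sqrt_sq_add_sq (ε y : ℝ) : |y| ≤ √(y ^ 2 + ε ^ 2) :=
  Real.abs_le_sqrt (by nlinarith [sq_nonneg ε])

lemma sqrt_sq_add_sq_le (hε : 0 ≤ ε) (y : ℝ) : √(y ^ 2 + ε ^ 2) ≤ |y| + ε := by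
  rw [Real.sqrt_le_left (by positivity)]
  nlinarith [sq_abs y, mul_nonneg (abs_nonneg y) hε]

lemma contDiff_smoothAbs (hε : 0 < ε) : ContDiff ℝ 1 (smoothAbs ε) :=
  (ContDiff.sqrt (by fun_prop) fun y => by positivity).sub contDiff_const

lemma hasDerivAt_smoothAbs (hε : 0 < ε) (y : ℝ) :
    HasDerivAt (smoothAbs ε) (smoothSign ε y) y := by
  have h : HasDerivAt (fun y : ℝ => y ^ 2 + ε ^ 2) (2 * y) y := by
    simpa using (hasDerivAt_pow 2 y).add_const (ε ^ 2)
  exact ((h.sqrt (by positivity)).sub_const ε).congr_deriv (mul_div_mul_left _ _ two_ne_zero)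

lemma smoothAbs_nonneg (ε y : ℝ) : 0 ≤ smoothAbs ε y :=
  sub_nonneg.2 (Real.le_sqrt_of_sq_le (by nlinarith [sq_nonneg y]))

lemma smoothAbs_le (hε : 0 ≤ ε) (y : ℝ) : smoothAbs ε y ≤ |y| :=
  sub_le_iff_le_add.2 (sqrt_sq_add_sq_le hε y)

lemma abs_le_smoothAbs_add (ε y : ℝ) : |y| ≤ smoothAbs ε y + ε := by
  rw [smoothAbs, sub_add_cancel]
  exact abs_le_sqrt_sq_add_sq ε y

lemma abs_smoothSign_le (ε y : ℝ) : |smoothSign ε y| ≤ 1 := by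
  rw [smoothSign, abs_div, abs_of_nonneg (Real.sqrt_nonneg _)]
  exact div_le_one_of_le₀ (abs_le_sqrt_sq_add_sq ε y) (Real.sqrt_nonneg _)

lemma smoothSign_mul_le_abs (ε y c : ℝ) : smoothSign ε y * c ≤ |c| := by
  refine (le_abs_self _).trans ?_
  rw [abs_mul]
  exact mul_le_of_le_one_left (abs_nonneg c) (abs_smoothSign_le ε y)

lemma smoothSign_mul_self_nonneg (ε y : ℝ) : 0 ≤ smoothSign ε y * y := by
  rw [smoothSign, div_mul_eq_mul_div]
  exact div_nonneg (mul_self_nonneg y) (Real.sqrt_nonneg _)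

lemma abs_le_smoothSign_mul_self_add (hε : 0 < ε) (y : ℝ) : |y| ≤ smoothSign ε y * y + ε := by
  rw [smoothSign, div_mul_eq_mul_div, ← sub_le_iff_le_add, le_div_iff₀ (sqrt_sq_add_sq_pos hε y)]
  nlinarith [abs_nonneg y, sq_abs y, sqrt_sq_add_sq_le hε.le y, abs_le_sqrt_sq_add_sq ε y]

variable {ι V : Type*} [Fintype ι]

/-- The energy density `p₀² + (∑ᵢ |pᵢ|)²` of a function `p₀` together with components `pᵢ` of its
gradient. The `ℓ¹` norm of the gradient occurs because it is dual to the supremum norm. -/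
def jetEnergy (p₀ : V → ℝ) (p : ι → V → ℝ) (z : V) : ℝ := p₀ z ^ 2 + (∑ i, |p i z|) ^ 2

/-- The `C¹` regularization of `jetEnergy p₀ p` which replaces `|pᵢ|` by `smoothAbs ε pᵢ`. -/
noncomputable def smoothJetEnergy (ε : ℝ) (p₀ : V → ℝ) (p : ι → V → ℝ) (z : V) : ℝ :=
  p₀ z ^ 2 + (∑ i, smoothAbs ε (p i z)) ^ 2

variable {p₀ : V → ℝ} {p : ι → V → ℝ} {z : V}

lemma jetEnergy_nonneg (p₀ : V → ℝ) (p : ι → V → ℝ) (z : V) : 0 ≤ jetEnergy p₀ p z :=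
  add_nonneg (sq_nonneg _) (sq_nonneg _)

lemma continuous_jetEnergy [TopologicalSpace V] (hp₀ : Continuous p₀)
    (hp : ∀ i, Continuous (p i)) : Continuous (jetEnergy p₀ p) := by
  unfold jetEnergy
  fun_prop

lemma smoothJetEnergy_nonneg (ε : ℝ) (p₀ : V → ℝ) (p : ι → V → ℝ) (z : V) :
    0 ≤ smoothJetEnergy ε p₀ p z :=
  add_nonneg (sq_nonneg _) (sq_nonneg _)

lemma sum_smoothAbs_nonneg (ε : ℝ) (y : ι → ℝ) : 0 ≤ ∑ i, smoothAbs ε (y i) :=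
  Finset.sum_nonneg fun _ _ => smoothAbs_nonneg ε _

lemma sum_smoothAbs_le (hε : 0 ≤ ε) (y : ι → ℝ) : ∑ i, smoothAbs ε (y i) ≤ ∑ i, |y i| :=
  Finset.sum_le_sum fun _ _ => smoothAbs_le hε _

lemma sum_abs_le_sum_smoothAbs_add (ε : ℝ) (y : ι → ℝ) :
    ∑ i, |y i| ≤ ∑ i, smoothAbs ε (y i) + Fintype.card ι * ε :=
  calc ∑ i, |y i| ≤ ∑ i, (smoothAbs ε (y i) + ε) :=
        Finset.sum_le_sum fun _ _ => abs_le_smoothAbs_add ε _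
    _ = _ := by simp [Finset.sum_add_distrib]

lemma smoothJetEnergy_le (hε : 0 ≤ ε) (p₀ : V → ℝ) (p : ι → V → ℝ) (z : V) :
    smoothJetEnergy ε p₀ p z ≤ jetEnergy p₀ p z := by
  unfold smoothJetEnergy jetEnergy
  gcongr
  · exact sum_smoothAbs_nonneg ε _
  · exact smoothAbs_le hε _

lemma jetEnergy_le_smoothJetEnergy_add (hε : 0 ≤ ε) (p₀ : V → ℝ) (p : ι → V → ℝ) (z : V) :
    jetEnergy p₀ p z ≤
      smoothJetEnergy ε p₀ p z + ε * (2 * Fintype.card ι * ∑ i, |p i z|) := by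
  have hle := sum_smoothAbs_le hε fun i => p i z
  have hge := sum_abs_le_sum_smoothAbs_add ε fun i => p i z
  have hnonneg := sum_smoothAbs_nonneg ε fun i => p i z
  unfold smoothJetEnergy jetEnergy
  nlinarith [(by positivity : 0 ≤ (Fintype.card ι : ℝ) * ε)]

lemma sum_smoothAbs_mul_sum_smoothSign_le (hε : 0 < ε) (a : ℝ) (q : ι → ℝ) :
    a * ((∑ i, smoothAbs ε (q i)) * ∑ i, smoothSign ε (q i) * q i) ≤
      a * (∑ i, |q i|) ^ 2 + ε * (2 * Fintype.card ι * |a| * ∑ i, |q i|) := by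
  set N := ∑ i, |q i|
  set S := ∑ i, smoothAbs ε (q i)
  set P := ∑ i, smoothSign ε (q i) * q i
  have hS : 0 ≤ S := sum_smoothAbs_nonneg ε q
  have hSN : S ≤ N := sum_smoothAbs_le hε.le q
  have hNS : N ≤ S + Fintype.card ι * ε := sum_abs_le_sum_smoothAbs_add ε q
  have hP : 0 ≤ P := Finset.sum_nonneg fun i _ => smoothSign_mul_self_nonneg ε _
  have hPN : P ≤ N := Finset.sum_le_sum fun i _ => smoothSign_mul_le_abs ε _ _
  have hNP : N ≤ P + Fintype.card ι * ε :=
    calc N ≤ ∑ i, (smoothSign ε (q i) * q i + ε) :=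
          Finset.sum_le_sum fun i _ => abs_le_smoothSign_mul_self_add hε _
      _ = P + Fintype.card ι * ε := by simp [Finset.sum_add_distrib, P]
  have hSP : S * P ≤ N ^ 2 := (mul_le_mul hSN hPN hP (hS.trans hSN)).trans_eq (sq N).symm
  have hdefect : N ^ 2 - S * P ≤ 2 * (Fintype.card ι * ε) * N := by nlinarith
  have habs : -a * (N ^ 2 - S * P) ≤ |a| * (2 * (Fintype.card ι * ε) * N) :=
    mul_le_mul (neg_le_abs a) hdefect (by linarith) (abs_nonneg a)
  linarith

lemma smoothJetEnergy_growth_le {q₀ a A κ g Γ : ℝ} {q r : ι → ℝ} (hε : 0 < ε) (hA : 0 ≤ A)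
    (hκ : 0 ≤ κ) (hr : ∑ i, |r i| ≤ A * |q₀| + κ * ∑ i, |q i| + Γ) :
    2 * q₀ * (a * q₀ + g) +
        2 * (∑ i, smoothAbs ε (q i)) * ∑ i, smoothSign ε (q i) * (a * q i + r i) ≤
      (2 * a + A + 2 * κ + 1) * (q₀ ^ 2 + (∑ i, |q i|) ^ 2) + (g ^ 2 + Γ ^ 2) +
        ε * (4 * Fintype.card ι * |a| * ∑ i, |q i|) := by
  have hmain := sum_smoothAbs_mul_sum_smoothSign_le hε a q
  have hsplit : ∑ i, smoothSign ε (q i) * (a * q i + r i) =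
      a * ∑ i, smoothSign ε (q i) * q i + ∑ i, smoothSign ε (q i) * r i := by
    rw [Finset.mul_sum, ← Finset.sum_add_distrib]
    exact Finset.sum_congr rfl fun i _ => by ring
  rw [hsplit]
  set N := ∑ i, |q i|
  set S := ∑ i, smoothAbs ε (q i)
  have hS : 0 ≤ S := sum_smoothAbs_nonneg ε q
  have hSN : S ≤ N := sum_smoothAbs_le hε.le q
  have hlower : S * ∑ i, smoothSign ε (q i) * r i ≤ N * (A * |q₀| + κ * N + Γ) :=
    mul_le_mul_of_nonneg hSN
      ((Finset.sum_le_sum fun i _ => smoothSign_mul_le_abs ε _ _).trans hr) hS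
      ((Finset.sum_nonneg fun i _ => abs_nonneg (r i)).trans hr)
  have hcross : A * (2 * (N * |q₀|)) ≤ A * (N ^ 2 + q₀ ^ 2) :=
    mul_le_mul_of_nonneg_left (by nlinarith [sq_nonneg (N - |q₀|), sq_abs q₀]) hA
  nlinarith [sq_nonneg (q₀ - g), sq_nonneg (N - Γ), mul_nonneg hκ (sq_nonneg q₀)]

variable [NormedAddCommGroup V] [NormedSpace ℝ V]

lemma contDiff_smoothJetEnergy (hε : 0 < ε) (hp₀ : ContDiff ℝ 1 p₀)
    (hp : ∀ i, ContDiff ℝ 1 (p i)) : ContDiff ℝ 1 (smoothJetEnergy ε p₀ p) :=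
  (hp₀.pow 2).add ((ContDiff.sum fun i _ => (contDiff_smoothAbs hε).comp (hp i)).pow 2)

lemma fderiv_smoothJetEnergy (hε : 0 < ε) (hp₀ : DifferentiableAt ℝ p₀ z)
    (hp : ∀ i, DifferentiableAt ℝ (p i) z) (b : V) :
    fderiv ℝ (smoothJetEnergy ε p₀ p) z b = 2 * p₀ z * fderiv ℝ p₀ z b +
      2 * (∑ i, smoothAbs ε (p i z)) * ∑ i, smoothSign ε (p i z) * fderiv ℝ (p i) z b := by
  have hS : HasFDerivAt (fun y => ∑ i, smoothAbs ε (p i y))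
      (∑ i, smoothSign ε (p i z) • fderiv ℝ (p i) z) z :=
    HasFDerivAt.fun_sum fun i _ =>
      (hasDerivAt_smoothAbs hε (p i z)).comp_hasFDerivAt z (hp i).hasFDerivAt
  have h : HasFDerivAt (smoothJetEnergy ε p₀ p) _ z := (hp₀.hasFDerivAt.pow 2).add (hS.pow 2)
  rw [h.fderiv]
  simp

lemma fderiv_smoothJetEnergy_le {a A κ g Γ : ℝ} {r : ι → ℝ} {b : V} (hε : 0 < ε) (hA : 0 ≤ A)
    (hκ : 0 ≤ κ) (hp₀ : DifferentiableAt ℝ p₀ z) (hp : ∀ i, DifferentiableAt ℝ (p i) z)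
    (hp₀b : fderiv ℝ p₀ z b = a * p₀ z + g) (hpb : ∀ i, fderiv ℝ (p i) z b = a * p i z + r i)
    (hr : ∑ i, |r i| ≤ A * |p₀ z| + κ * ∑ i, |p i z| + Γ) :
    fderiv ℝ (smoothJetEnergy ε p₀ p) z b ≤
      (2 * a + A + 2 * κ + 1) * jetEnergy p₀ p z + (g ^ 2 + Γ ^ 2) +
        ε * (4 * Fintype.card ι * |a| * ∑ i, |p i z|) := by
  simp only [fderiv_smoothJetEnergy hε hp₀ hp, hp₀b, hpb]
  exact smoothJetEnergy_growth_le hε hA hκ hr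

end JetEnergy

/-! ### Cutoffs decreasing along trajectories -/

section Cutoff

lemma fderiv_apply_eq_of_hasDerivAt {V W : Type*} [NormedAddCommGroup V] [NormedSpace ℝ V]
    [NormedAddCommGroup W] [NormedSpace ℝ W] {g : V → W} {z b : V} {c : W}
    (hg : DifferentiableAt ℝ g z) (h : HasDerivAt (fun s : ℝ => g (z + s • b)) c 0) :
    fderiv ℝ g z b = c :=
  (hg.hasFDerivAt.hasLineDerivAt b).unique h

lemma fderiv_smoothTransition_comp_nonpos {V : Type*} [NormedAddCommGroup V] [NormedSpace ℝ V]
    {g : V → ℝ} {z b : V} (hg : DifferentiableAt ℝ g z) (h : fderiv ℝ g z b ≤ 0) :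
    fderiv ℝ (fun y => smoothTransition (g y)) z b ≤ 0 := by
  have hσ : DifferentiableAt ℝ smoothTransition (g z) :=
    smoothTransition.contDiff.differentiable one_ne_zero (g z)
  have hcomp : HasFDerivAt (fun y => smoothTransition (g y)) _ z :=
    hσ.hasDerivAt.comp_hasFDerivAt z hg.hasFDerivAt
  rw [hcomp.fderiv]
  exact mul_nonpos_of_nonneg_of_nonpos smoothTransition.monotone.deriv_nonneg h

/-- A cutoff to the positions `x < X` and velocities `|v| < M`. Its support shrinks in time faster
than particles of speed at most `M` and acceleration at most `1` move, so that it decreases along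
their trajectories. -/
noncomputable def transportCutoff {Y : Type*} (M X : ℝ) (z : ℝ × ℝ × ℝ × Y) : ℝ :=
  smoothTransition (X - z.2.1 - M * z.1) * smoothTransition (M ^ 2 - z.2.2.1 ^ 2 - 2 * M * z.1)

section

variable {Y : Type*} {M X t x v : ℝ} {η : Y}

lemma transportCutoff_nonneg (M X : ℝ) (z : ℝ × ℝ × ℝ × Y) : 0 ≤ transportCutoff M X z :=
  mul_nonneg (smoothTransition.nonneg _) (smoothTransition.nonneg _)

lemma transportCutoff_le_one (M X : ℝ) (z : ℝ × ℝ × ℝ × Y) : transportCutoff M X z ≤ 1 :=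
  mul_le_one₀ (smoothTransition.le_one _) (smoothTransition.nonneg _) (smoothTransition.le_one _)

lemma transportCutoff_eq_zero_of_position (hM : 0 ≤ M) (ht : 0 ≤ t) (ξ : ℝ × Y) :
    transportCutoff M X (t, X, ξ) = 0 := by
  rw [transportCutoff, smoothTransition.zero_of_nonpos, zero_mul]
  simpa using mul_nonneg hM ht

lemma transportCutoff_eq_zero_of_velocity (ht : 0 ≤ t) (hv : |v| = M) :
    transportCutoff M X (t, x, v, η) = 0 := by
  have hM : 0 ≤ M := hv ▸ abs_nonneg v
  rw [transportCutoff, smoothTransition.zero_of_nonpos (x := M ^ 2 - _ - _), mul_zero]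
  have : 0 ≤ M * t := mul_nonneg hM ht
  rw [← hv, sq_abs, hv]
  linarith

lemma transportCutoff_eq_one (hx : x + M * t + 1 ≤ X) (hv : v ^ 2 + 2 * M * t + 1 ≤ M ^ 2) :
    transportCutoff M X (t, x, v, η) = 1 := by
  rw [transportCutoff, smoothTransition.one_of_one_le, smoothTransition.one_of_one_le, one_mul]
  · linarith
  · linarith

end

variable {Y : Type*} [NormedAddCommGroup Y] [NormedSpace ℝ Y]

lemma contDiff_transportCutoff (M X : ℝ) :
    ContDiff ℝ 1 (transportCutoff M X : ℝ × ℝ × ℝ × Y → ℝ) :=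
  (smoothTransition.contDiff.comp (by fun_prop)).mul (smoothTransition.contDiff.comp (by fun_prop))

lemma fderiv_transportCutoff_vlasovField_nonpos {E : ℝ → ℝ → ℝ} {M : ℝ} {z : ℝ × ℝ × ℝ × Y}
    (X : ℝ) (hv : |z.2.2.1| ≤ M) (hE : |E z.1 z.2.1| ≤ 1) :
    fderiv ℝ (transportCutoff M X) z (vlasovField E z) ≤ 0 := by
  obtain ⟨t, x, v, η⟩ := z
  have ht : HasDerivAt (fun s : ℝ => t + s * 1) 1 0 := by
    simpa using (hasDerivAt_id (0 : ℝ)).const_add t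
  have hx : HasDerivAt (fun s : ℝ => x + s * v) v 0 := by
    simpa using ((hasDerivAt_id (0 : ℝ)).mul_const v).const_add x
  have hw : HasDerivAt (fun s : ℝ => v + s * E t x) (E t x) 0 := by
    simpa using ((hasDerivAt_id (0 : ℝ)).mul_const (E t x)).const_add v
  have hposition : fderiv ℝ (fun z : ℝ × ℝ × ℝ × Y => X - z.2.1 - M * z.1) (t, x, v, η)
      (vlasovField E (t, x, v, η)) ≤ 0 := by
    rw [fderiv_apply_eq_of_hasDerivAt (by fun_prop) ((hx.const_sub X).sub (ht.const_mul M))]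
    linarith [neg_le_of_abs_le hv]
  have hvelocity : fderiv ℝ (fun z : ℝ × ℝ × ℝ × Y => M ^ 2 - z.2.2.1 ^ 2 - 2 * M * z.1)
      (t, x, v, η) (vlasovField E (t, x, v, η)) ≤ 0 := by
    have hvE : |v * E t x| ≤ M := by
      rw [abs_mul]
      exact (mul_le_of_le_one_right (abs_nonneg v) hE).trans hv
    rw [fderiv_apply_eq_of_hasDerivAt (by fun_prop)
      (((hw.fun_pow 2).const_sub (M ^ 2)).sub (ht.const_mul (2 * M)))]
    norm_num
    linarith [neg_le_of_abs_le hvE]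
  have hσ : Differentiable ℝ smoothTransition :=
    smoothTransition.contDiff.differentiable one_ne_zero
  unfold transportCutoff
  rw [fderiv_fun_mul (by fun_prop) (by fun_prop)]
  exact add_nonpos
    (mul_nonpos_of_nonneg_of_nonpos (smoothTransition.nonneg _)
      (fderiv_smoothTransition_comp_nonpos (by fun_prop) hvelocity))
    (mul_nonpos_of_nonneg_of_nonpos (smoothTransition.nonneg _)
      (fderiv_smoothTransition_comp_nonpos (by fun_prop) hposition))

end Cutoff

section LocalizedEnergy

variable {Y : Type*} [NormedAddCommGroup Y] [NormedSpace ℝ Y] {E : ℝ → ℝ → ℝ} {C T X M : ℝ}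

/-- The cutoff `transportCutoff M X` times `e^{C(T-t)}`, which decays at rate `C` along the Vlasov
field and equals the plain cutoff at time `T`. -/
noncomputable def decayingCutoff {Y : Type*} (C T M X : ℝ) (z : ℝ × ℝ × ℝ × Y) : ℝ :=
  exp (C * (T - z.1)) * transportCutoff M X z

lemma decayingCutoff_nonneg {Y : Type*} (C T M X : ℝ) (z : ℝ × ℝ × ℝ × Y) :
    0 ≤ decayingCutoff C T M X z :=
  mul_nonneg (exp_pos _).le (transportCutoff_nonneg M X z)

lemma contDiff_decayingCutoff (C T M X : ℝ) :
    ContDiff ℝ 1 (decayingCutoff C T M X : ℝ × ℝ × ℝ × Y → ℝ) :=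
  ContDiff.mul (by fun_prop) (contDiff_transportCutoff M X)

lemma fderiv_decayingCutoff_vlasovField_le {z : ℝ × ℝ × ℝ × Y} (C T X : ℝ)
    (hv : |z.2.2.1| ≤ M) (hE : |E z.1 z.2.1| ≤ 1) :
    fderiv ℝ (decayingCutoff C T M X) z (vlasovField E z) ≤ -C * decayingCutoff C T M X z := by
  have hexp : fderiv ℝ (fun z : ℝ × ℝ × ℝ × Y => exp (C * (T - z.1))) z (vlasovField E z) =
      -C * exp (C * (T - z.1)) := by
    have h := ((((hasDerivAt_id (0 : ℝ)).const_add z.1).const_sub T).const_mul C).exp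
    refine fderiv_apply_eq_of_hasDerivAt (by fun_prop) ?_
    simpa [vlasovField, mul_comm] using h
  unfold decayingCutoff
  rw [fderiv_fun_mul (by fun_prop) ((contDiff_transportCutoff M X).differentiable one_ne_zero z)]
  have hcutoff := mul_nonpos_of_nonneg_of_nonpos (exp_pos (C * (T - z.1))).le
    (fderiv_transportCutoff_vlasovField_nonpos X hv hE)
  simp only [add_apply, smul_apply, smul_eq_mul, hexp]
  linarith

variable {ι : Type*} [Fintype ι] {p₀ : ℝ × ℝ × ℝ × Y → ℝ} {p : ι → ℝ × ℝ × ℝ × Y → ℝ}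

lemma fderiv_decayingCutoff_mul_smoothJetEnergy_le {z : ℝ × ℝ × ℝ × Y} {ε c h : ℝ} (hε : 0 < ε)
    (hC : 0 ≤ C) (hp₀ : ContDiff ℝ 1 p₀) (hp : ∀ i, ContDiff ℝ 1 (p i)) (X : ℝ)
    (hv : |z.2.2.1| ≤ M) (hE : |E z.1 z.2.1| ≤ 1)
    (hgrowth : fderiv ℝ (smoothJetEnergy ε p₀ p) z (vlasovField E z) ≤
      (C - c) * jetEnergy p₀ p z + h) :
    fderiv ℝ (fun y => decayingCutoff C T M X y * smoothJetEnergy ε p₀ p y) z (vlasovField E z) ≤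
      decayingCutoff C T M X z * (h - c * jetEnergy p₀ p z +
        ε * (C * (2 * Fintype.card ι * ∑ i, |p i z|))) := by
  rw [fderiv_fun_mul ((contDiff_decayingCutoff C T M X).differentiable one_ne_zero z)
    ((contDiff_smoothJetEnergy hε hp₀ hp).differentiable one_ne_zero z)]
  simp only [add_apply, smul_apply, smul_eq_mul]
  have hdecay := mul_le_mul_of_nonneg_left (fderiv_decayingCutoff_vlasovField_le C T X hv hE)
    (smoothJetEnergy_nonneg ε p₀ p z)
  have hw := decayingCutoff_nonneg C T M X z
  have hgrowth' := mul_le_mul_of_nonneg_left hgrowth hw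
  have happrox := mul_le_mul_of_nonneg_left (mul_le_mul_of_nonneg_left
    (jetEnergy_le_smoothJetEnergy_add hε.le p₀ p z) hC) hw
  linarith

variable [ProperSpace Y] [MeasureSpace Y] [BorelSpace Y]
  [IsFiniteMeasureOnCompacts (volume : Measure Y)] {S : Set Y} {d H R : ℝ × ℝ × ℝ × Y → ℝ}

lemma setIntegral_decayingCutoff_mul_jetEnergy_le (hE : Continuous fun p : ℝ × ℝ => E p.1 p.2)
    (hp₀ : ContDiff ℝ 1 p₀) (hp : ∀ i, ContDiff ℝ 1 (p i)) (hd : Continuous d)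
    (hH : Continuous H) (hR : Continuous R) (hR₀ : ∀ z, 0 ≤ R z)
    (hC : 0 ≤ C) (hT : 0 ≤ T) (hX : 0 ≤ X) (hM : 0 ≤ M)
    (hS : Bornology.IsBounded S) (hSm : MeasurableSet S)
    (hEs : ∀ t ∈ Ioo 0 T, ∀ x > 0, |E t x| ≤ 1)
    (hinflow : ∀ t ∈ Ioo 0 T, ∀ ξ : ℝ × Y, 0 ≤ ξ.1 → jetEnergy p₀ p (t, 0, ξ) = 0)
    (hgrowth : ∀ ε > 0, ∀ t ∈ Ioo 0 T, ∀ x > 0, ∀ ξ : ℝ × Y,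
      fderiv ℝ (smoothJetEnergy ε p₀ p) (t, x, ξ) (vlasovField E (t, x, ξ)) ≤
        (C - d (t, x, ξ)) * jetEnergy p₀ p (t, x, ξ) + H (t, x, ξ) + ε * R (t, x, ξ)) :
    ∫ q in phaseBox X M S, decayingCutoff C T M X (T, q) * jetEnergy p₀ p (T, q) ≤
      (∫ q in phaseBox X M S, decayingCutoff C T M X (0, q) * jetEnergy p₀ p (0, q)) +
      ∫ z in Ioo 0 T ×ˢ phaseBox X M S,
        decayingCutoff C T M X z * (H z - d z * jetEnergy p₀ p z) := by
  have hw : Continuous (decayingCutoff C T M X : ℝ × ℝ × ℝ × Y → ℝ) :=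
    (contDiff_decayingCutoff C T M X).continuous
  have hw₀ : ∀ z : ℝ × ℝ × ℝ × Y, 0 ≤ decayingCutoff C T M X z := decayingCutoff_nonneg C T M X
  have hpc := fun i => (hp i).continuous
  have hW := continuous_jetEnergy hp₀.continuous hpc
  set D : ℝ × ℝ × ℝ × Y → ℝ := fun z => 2 * Fintype.card ι * ∑ i, |p i z|
  have hD₀ (z) : 0 ≤ D z := by positivity
  refine setIntegral_le_of_forall_exists_approx
    (Φ := fun z => decayingCutoff C T M X z * jetEnergy p₀ p z)
    (R := fun z => decayingCutoff C T M X z * (R z + (C + 1) * D z))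
    hE (by fun_prop) (by fun_prop) (by fun_prop) hT hX hM hS hSm
    (fun t ht ξ hξ => by rw [hinflow t ht ξ hξ, mul_zero])
    (fun t ht ξ => by
      rw [decayingCutoff, transportCutoff_eq_zero_of_position hM ht.1.le, mul_zero, zero_mul])
    (fun t ht x v η hv => by
      rw [decayingCutoff, transportCutoff_eq_zero_of_velocity ht.1.le hv, mul_zero, zero_mul])
    fun ε hε => ⟨fun z => decayingCutoff C T M X z * smoothJetEnergy ε p₀ p z,
      (contDiff_decayingCutoff C T M X).mul (contDiff_smoothJetEnergy hε hp₀ hp),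
      fun z => ⟨mul_nonneg (hw₀ z) (smoothJetEnergy_nonneg ε p₀ p z),
        mul_le_mul_of_nonneg_left (smoothJetEnergy_le hε.le p₀ p z) (hw₀ z), ?_⟩, ?_⟩
  · have happrox := mul_le_mul_of_nonneg_left
      (jetEnergy_le_smoothJetEnergy_add hε.le p₀ p z) (hw₀ z)
    have herror : 0 ≤ decayingCutoff C T M X z * (ε * (R z + C * D z)) :=
      mul_nonneg (hw₀ z) (mul_nonneg hε.le (add_nonneg (hR₀ z) (mul_nonneg hC (hD₀ z))))
    linarith
  · rintro ⟨t, x, v, η⟩ ⟨ht, hx, hv, -⟩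
    refine (fderiv_decayingCutoff_mul_smoothJetEnergy_le hε hC hp₀ hp X
      (abs_le.2 ⟨hv.1.le, hv.2.le⟩) (hEs t ht x hx.1)
      ((hgrowth ε hε t ht x hx.1 (v, η)).trans_eq (add_assoc _ _ _))).trans ?_
    have herror := mul_nonneg (hw₀ (t, x, v, η)) (mul_nonneg hε.le (hD₀ (t, x, v, η)))
    linarith

end LocalizedEnergy

/-! ### The weighted function and its gradient -/

section DualNorm

variable {V W : Type*} [NormedAddCommGroup V] [NormedSpace ℝ V] [NormedAddCommGroup W]
  [NormedSpace ℝ W]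

lemma abs_apply_add_abs_apply_le_norm (L : V × W →L[ℝ] ℝ) {v : V} {w : W} (hv : ‖v‖ ≤ 1)
    (hw : ‖w‖ ≤ 1) : |L (v, 0)| + |L (0, w)| ≤ ‖L‖ := by
  have hadd : |L (v, 0) + L (0, w)| ≤ ‖L‖ := by
    simpa [← map_add] using L.unit_le_opNorm (v, w) (by simp [hv, hw])
  have hsub : |L (v, 0) - L (0, w)| ≤ ‖L‖ := by
    simpa [← map_sub] using L.unit_le_opNorm (v, -w) (by simp [hv, hw])
  rw [abs_le] at hadd hsub
  rcases abs_cases (L (v, 0)) with h₁ | h₁ <;> rcases abs_cases (L (0, w)) with h₂ | h₂ <;> linarith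

lemma norm_comp_inl_add_norm_comp_inr (L : V × W →L[ℝ] ℝ) :
    ‖L.comp (.inl ℝ V W)‖ + ‖L.comp (.inr ℝ V W)‖ = ‖L‖ := by
  apply le_antisymm
  · have hinr (v : V) (hv : ‖v‖ ≤ 1) : ‖L.comp (.inr ℝ V W)‖ ≤ ‖L‖ - |L (v, 0)| := by
      have h₀ := abs_apply_add_abs_apply_le_norm L hv (w := 0) (by simp)
      refine ContinuousLinearMap.opNorm_le_of_unit_norm
        (by linarith [abs_nonneg (L (0, (0 : W)))]) fun w hw => ?_
      exact le_sub_iff_add_le'.2 (abs_apply_add_abs_apply_le_norm L hv hw.le)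
    refine le_sub_iff_add_le.1 (ContinuousLinearMap.opNorm_le_of_unit_norm ?_ fun v hv => ?_)
    · exact sub_nonneg.2 (by simpa [← Prod.zero_eq_mk] using hinr 0 (by simp))
    · exact le_sub_comm.1 (hinr v hv.le)
  · refine L.opNorm_le_bound (by positivity) fun ⟨v, w⟩ => ?_
    calc ‖L (v, w)‖ = ‖L.comp (.inl ℝ V W) v + L.comp (.inr ℝ V W) w‖ := by simp [← map_add]
      _ ≤ ‖L.comp (.inl ℝ V W)‖ * ‖v‖ + ‖L.comp (.inr ℝ V W)‖ * ‖w‖ :=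
        norm_add_le_of_le (ContinuousLinearMap.le_opNorm _ _) (ContinuousLinearMap.le_opNorm _ _)
      _ ≤ ‖L.comp (.inl ℝ V W)‖ * ‖(v, w)‖ + ‖L.comp (.inr ℝ V W)‖ * ‖(v, w)‖ := by
        gcongr
        exacts [norm_fst_le (v, w), norm_snd_le (v, w)]
      _ = (‖L.comp (.inl ℝ V W)‖ + ‖L.comp (.inr ℝ V W)‖) * ‖(v, w)‖ := (add_mul _ _ _).symm

lemma norm_eq_abs_apply_one (L : ℝ →L[ℝ] ℝ) : ‖L‖ = |L 1| := by
  have hspan : L = ContinuousLinearMap.toSpanSingleton ℝ (L 1) := by ext; simp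
  rw [hspan, ContinuousLinearMap.norm_toSpanSingleton]
  simp

lemma norm_eq_sum_abs_apply_basis (L : ℝ × ℝ × ℝ × ℝ →L[ℝ] ℝ) :
    ‖L‖ = |L (1, 0)| + (|L (0, 1, 0)| + (|L (0, 0, 1, 0)| + |L (0, 0, 0, 1)|)) := by
  simp only [← norm_comp_inl_add_norm_comp_inr (V := ℝ), norm_eq_abs_apply_one]
  rfl

end DualNorm

section CommutedTransport

lemma fderiv_fderiv_apply_of_transport {V : Type*} [NormedAddCommGroup V] [NormedSpace ℝ V]
    {g a G : V → ℝ} {b : V → V} {z : V} (hg : ContDiffAt ℝ 2 g z) (ha : DifferentiableAt ℝ a z)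
    (hG : DifferentiableAt ℝ G z) (hb : DifferentiableAt ℝ b z)
    (htransport : ∀ᶠ y in nhds z, fderiv ℝ g y (b y) = a y * g y + G y) (w : V) :
    fderiv ℝ (fun y => fderiv ℝ g y w) z (b z) = a z * fderiv ℝ g z w +
      (g z * fderiv ℝ a z w + fderiv ℝ G z w - fderiv ℝ g z (fderiv ℝ b z w)) := by
  have hgz : DifferentiableAt ℝ g z := hg.differentiableAt two_ne_zero
  have hdg : DifferentiableAt ℝ (fderiv ℝ g) z :=
    (hg.fderiv_right (m := 1) le_rfl).differentiableAt one_ne_zero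
  have hsymm : IsSymmSndFDerivAt ℝ g z := hg.isSymmSndFDerivAt (by simp)
  have hderiv := congrArg (fun L : V →L[ℝ] ℝ => L w) (EventuallyEq.fderiv_eq htransport)
  rw [fderiv_clm_apply hdg hb, fderiv_fun_add (ha.fun_mul hgz) hG, fderiv_fun_mul ha hgz] at hderiv
  rw [fderiv_clm_apply hdg (differentiableAt_const w)]
  simp only [add_apply, ContinuousLinearMap.comp_apply, ContinuousLinearMap.flip_apply,
    hsymm.eq w (b z), smul_apply, smul_eq_mul, fderiv_fun_const, Pi.zero_apply,
    ContinuousLinearMap.comp_zero, zero_add] at hderiv ⊢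
  linarith

end CommutedTransport

section WeightedEquation

variable {α θ u : ℝ} {E : ℝ → ℝ → ℝ} {f F : ℝ → ℝ → ℝ × ℝ × ℝ → ℝ}

/-- The linearized Vlasov equation
`∂ₜf + ξ₁∂ₓf + E∂_{ξ₁}f - ((ξ₁ - u∞)/(2θ∞))Ef = F` at the point `(t, x, ξ)`. -/
def VlasovEquation (θ u : ℝ) (E : ℝ → ℝ → ℝ) (f F : ℝ → ℝ → ℝ × ℝ × ℝ → ℝ) (t x : ℝ)
    (ξ : ℝ × ℝ × ℝ) : Prop :=
  deriv (fun s => f s x ξ) t + ξ.1 * deriv (fun y => f t y ξ) x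
    + E t x * deriv (fun v => f t x (v, ξ.2)) ξ.1
    - ((ξ.1 - u) / (2 * θ)) * E t x * f t x ξ = F t x ξ

/-- The weighted function `e^{αx/2} f`, as a function on space-time. -/
noncomputable def weighted (α : ℝ) (f : ℝ → ℝ → ℝ × ℝ × ℝ → ℝ) (z : ℝ × ℝ × ℝ × ℝ × ℝ) : ℝ :=
  exp (α * z.2.1 / 2) * f z.1 z.2.1 z.2.2

lemma contDiff_weighted {n : WithTop ℕ∞} (α : ℝ)
    (hf : ContDiff ℝ n fun p : ℝ × ℝ × (ℝ × ℝ × ℝ) => f p.1 p.2.1 p.2.2) :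
    ContDiff ℝ n (weighted α f) :=
  ContDiff.mul (by fun_prop) hf

/-- The rate at which the equation makes `e^{αx/2} f` grow along the Vlasov field. -/
noncomputable def growthRate (α θ u : ℝ) (E : ℝ → ℝ → ℝ) (z : ℝ × ℝ × ℝ × ℝ × ℝ) : ℝ :=
  α / 2 * z.2.2.1 + (z.2.2.1 - u) / (2 * θ) * E z.1 z.2.1

lemma VlasovEquation.fderiv_weighted {t x : ℝ} {ξ : ℝ × ℝ × ℝ}
    (hf : Differentiable ℝ fun p : ℝ × ℝ × (ℝ × ℝ × ℝ) => f p.1 p.2.1 p.2.2)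
    (h : VlasovEquation θ u E f F t x ξ) (α : ℝ) :
    fderiv ℝ (weighted α f) (t, x, ξ) (vlasovField E (t, x, ξ)) =
      growthRate α θ u E (t, x, ξ) * weighted α f (t, x, ξ) + weighted α F (t, x, ξ) := by
  have hexp : fderiv ℝ (fun z : ℝ × ℝ × (ℝ × ℝ × ℝ) => exp (α * z.2.1 / 2)) (t, x, ξ)
      (vlasovField E (t, x, ξ)) = α / 2 * ξ.1 * exp (α * x / 2) := by
    have hline := (((hasDerivAt_id (0 : ℝ)).mul_const ξ.1).const_add x).const_mul α
    refine fderiv_apply_eq_of_hasDerivAt (by fun_prop)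
      ((hline.div_const 2).exp.congr_deriv ?_)
    simp
    ring
  have hf' := fderiv_vlasovField_eq (Φ := fun p : ℝ × ℝ × (ℝ × ℝ × ℝ) => f p.1 p.2.1 p.2.2)
    E (t, x, ξ)
  rw [VlasovEquation, (hasDerivAt_time hf t (x, ξ)).deriv,
    (hasDerivAt_position hf t x ξ).deriv, (hasDerivAt_velocity hf t x ξ.1 ξ.2).deriv] at h
  unfold weighted
  rw [fderiv_fun_mul (by fun_prop) (hf (t, x, ξ))]
  simp only [add_apply, smul_apply, smul_eq_mul, hexp, hf', growthRate, ← h]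
  ring

lemma hasDerivAt_field_along (hE : ContDiff ℝ 1 fun p : ℝ × ℝ => E p.1 p.2) (t x a : ℝ) :
    HasDerivAt (fun s => E t (x + s * a)) (a * deriv (E t) x) 0 := by
  have hEx : DifferentiableAt ℝ (E t) x :=
    (hE.differentiable one_ne_zero (t, x)).comp x (by fun_prop)
  have hline := ((hasDerivAt_id (0 : ℝ)).mul_const a).const_add x
  have hEx' : HasDerivAt (E t) (deriv (E t) x) (x + id 0 * a) := by simpa using hEx.hasDerivAt
  exact (hEx'.comp 0 hline).congr_deriv (by simp [mul_comm])

lemma fderiv_growthRate_apply (α θ u : ℝ) (hE : ContDiff ℝ 1 fun p : ℝ × ℝ => E p.1 p.2)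
    (z : ℝ × ℝ × ℝ × ℝ × ℝ) (w : ℝ × ℝ × ℝ × ℝ) :
    fderiv ℝ (growthRate α θ u E) z (0, w) =
      w.1 * ((z.2.2.1 - u) / (2 * θ) * deriv (E z.1) z.2.1) +
        w.2.1 * (α / 2 + E z.1 z.2.1 / (2 * θ)) := by
  have hEd := hE.differentiable one_ne_zero
  have hv := ((hasDerivAt_id (0 : ℝ)).mul_const w.2.1).const_add z.2.2.1
  have hline := (hv.const_mul (α / 2)).fun_add (((hv.sub_const u).div_const (2 * θ)).fun_mul
    (hasDerivAt_field_along hE z.1 z.2.1 w.1))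
  unfold growthRate
  refine fderiv_apply_eq_of_hasDerivAt (by fun_prop) ?_
  simp only [Prod.fst_add, Prod.snd_add, Prod.smul_fst, Prod.smul_snd, smul_eq_mul,
    mul_zero, add_zero]
  refine hline.congr_deriv ?_
  simp
  ring

lemma fderiv_vlasovField_apply (hE : ContDiff ℝ 1 fun p : ℝ × ℝ => E p.1 p.2)
    (z : ℝ × ℝ × ℝ × ℝ × ℝ) (w : ℝ × ℝ × ℝ × ℝ) :
    fderiv ℝ (vlasovField E) z (0, w) = (0, w.2.1, w.1 * deriv (E z.1) z.2.1, 0) := by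
  have hEd := hE.differentiable one_ne_zero
  have hv := ((hasDerivAt_id (0 : ℝ)).mul_const w.2.1).const_add z.2.2.1
  have hline := (hasDerivAt_const (0 : ℝ) (1 : ℝ)).prodMk
    (hv.prodMk ((hasDerivAt_field_along hE z.1 z.2.1 w.1).prodMk
      (hasDerivAt_const (0 : ℝ) (0 : ℝ × ℝ))))
  unfold vlasovField
  refine fderiv_apply_eq_of_hasDerivAt (by fun_prop) ?_
  simpa using hline

end WeightedEquation

section WeightedGradient

variable {α θ u T : ℝ} {E : ℝ → ℝ → ℝ} {f F : ℝ → ℝ → ℝ × ℝ × ℝ → ℝ}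

/-- The coordinate directions of the phase space variable `(x, ξ)`. -/
def phaseBasis : Fin 4 → ℝ × ℝ × ℝ × ℝ :=
  ![(1, 0), (0, 1, 0), (0, 0, 1, 0), (0, 0, 0, 1)]

/-- The components of `∇_{x,ξ}(e^{αx/2} f)`. -/
noncomputable def weightedGrad (α : ℝ) (f : ℝ → ℝ → ℝ × ℝ × ℝ → ℝ) (i : Fin 4)
    (z : ℝ × ℝ × ℝ × ℝ × ℝ) : ℝ :=
  fderiv ℝ (weighted α f) z (0, phaseBasis i)

/-- The source term in the transport equation for `weightedGrad α f i`, which arises from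
commuting the derivative with the equation for `weighted α f`. -/
noncomputable def gradSource (α θ u : ℝ) (E : ℝ → ℝ → ℝ) (f F : ℝ → ℝ → ℝ × ℝ × ℝ → ℝ) (i : Fin 4)
    (z : ℝ × ℝ × ℝ × ℝ × ℝ) : ℝ :=
  weighted α f z * fderiv ℝ (growthRate α θ u E) z (0, phaseBasis i) + weightedGrad α F i z -
    fderiv ℝ (weighted α f) z (fderiv ℝ (vlasovField E) z (0, phaseBasis i))

lemma contDiff_weightedGrad (α : ℝ)
    (hf : ContDiff ℝ 2 fun p : ℝ × ℝ × (ℝ × ℝ × ℝ) => f p.1 p.2.1 p.2.2) (i : Fin 4) :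
    ContDiff ℝ 1 (weightedGrad α f i) :=
  ((contDiff_weighted α hf).fderiv_right le_rfl).clm_apply contDiff_const

lemma continuous_weightedGrad (α : ℝ)
    (hf : ContDiff ℝ 1 fun p : ℝ × ℝ × (ℝ × ℝ × ℝ) => f p.1 p.2.1 p.2.2) (i : Fin 4) :
    Continuous (weightedGrad α f i) :=
  continuous_fderiv_apply (contDiff_weighted α hf) _

lemma fderiv_weightedGrad_vlasovField (hE : ContDiff ℝ 1 fun p : ℝ × ℝ => E p.1 p.2)
    (hF : ContDiff ℝ 1 fun p : ℝ × ℝ × (ℝ × ℝ × ℝ) => F p.1 p.2.1 p.2.2)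
    (hf : ContDiff ℝ 2 fun p : ℝ × ℝ × (ℝ × ℝ × ℝ) => f p.1 p.2.1 p.2.2)
    (heq : ∀ t ∈ Ioo 0 T, ∀ x > 0, ∀ ξ, VlasovEquation θ u E f F t x ξ)
    {t x : ℝ} (ht : t ∈ Ioo 0 T) (hx : 0 < x) (ξ : ℝ × ℝ × ℝ) (i : Fin 4) :
    fderiv ℝ (weightedGrad α f i) (t, x, ξ) (vlasovField E (t, x, ξ)) =
      growthRate α θ u E (t, x, ξ) * weightedGrad α f i (t, x, ξ) +
        gradSource α θ u E f F i (t, x, ξ) := by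
  have hEd := hE.differentiable one_ne_zero
  have hopen : IsOpen (Ioo 0 T ×ˢ Ioi 0 ×ˢ univ : Set (ℝ × ℝ × ℝ × ℝ × ℝ)) :=
    isOpen_Ioo.prod (isOpen_Ioi.prod isOpen_univ)
  refine fderiv_fderiv_apply_of_transport (contDiff_weighted α hf).contDiffAt
    (by unfold growthRate; fun_prop)
    ((contDiff_weighted α hF).differentiable one_ne_zero _)
    (by unfold vlasovField; fun_prop) ?_ (0, phaseBasis i)
  filter_upwards [hopen.mem_nhds ⟨ht, hx, mem_univ ξ⟩] with y hy
  exact (heq y.1 hy.1 y.2.1 hy.2.1 y.2.2).fderiv_weighted (hf.differentiable two_ne_zero) α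

lemma gradSource_eq (α θ u : ℝ) (hE : ContDiff ℝ 1 fun p : ℝ × ℝ => E p.1 p.2)
    (f F : ℝ → ℝ → ℝ × ℝ × ℝ → ℝ) (i : Fin 4) (z : ℝ × ℝ × ℝ × ℝ × ℝ) :
    gradSource α θ u E f F i z =
      weighted α f z * ((phaseBasis i).1 * ((z.2.2.1 - u) / (2 * θ) * deriv (E z.1) z.2.1) +
        (phaseBasis i).2.1 * (α / 2 + E z.1 z.2.1 / (2 * θ))) + weightedGrad α F i z -
      ((phaseBasis i).2.1 * weightedGrad α f 0 z +
        (phaseBasis i).1 * deriv (E z.1) z.2.1 * weightedGrad α f 1 z) := by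
  have hsplit (a b : ℝ) : ((0, a, b, 0) : ℝ × ℝ × ℝ × ℝ × ℝ) =
      a • (0, phaseBasis 0) + b • (0, phaseBasis 1) := by
    simp [phaseBasis]
  rw [gradSource, fderiv_growthRate_apply α θ u hE, fderiv_vlasovField_apply hE, hsplit, map_add,
    map_smul, map_smul, smul_eq_mul, smul_eq_mul]
  rfl

lemma sum_abs_gradSource_le (α θ u : ℝ) (hE : ContDiff ℝ 1 fun p : ℝ × ℝ => E p.1 p.2)
    (f F : ℝ → ℝ → ℝ × ℝ × ℝ → ℝ) {z : ℝ × ℝ × ℝ × ℝ × ℝ}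
    (hEx : |deriv (E z.1) z.2.1| ≤ 1) :
    ∑ i, |gradSource α θ u E f F i z| ≤
      (|(z.2.2.1 - u) / (2 * θ) * deriv (E z.1) z.2.1| + |α / 2 + E z.1 z.2.1 / (2 * θ)|) *
          |weighted α f z| +
        1 * ∑ i, |weightedGrad α f i z| + ∑ i, |weightedGrad α F i z| := by
  have htri (a b c : ℝ) : |a * b + c| ≤ |b| * |a| + |c| :=
    (abs_add_le _ _).trans_eq (by rw [abs_mul, mul_comm])
  have hx : |weighted α f z * ((z.2.2.1 - u) / (2 * θ) * deriv (E z.1) z.2.1) +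
      weightedGrad α F 0 z - deriv (E z.1) z.2.1 * weightedGrad α f 1 z| ≤
      |(z.2.2.1 - u) / (2 * θ) * deriv (E z.1) z.2.1| * |weighted α f z| +
        |weightedGrad α F 0 z| + |weightedGrad α f 1 z| := by
    refine (abs_sub _ _).trans (add_le_add (htri _ _ _) ?_)
    rw [abs_mul]
    exact mul_le_of_le_one_left (abs_nonneg _) hEx
  have hv : |weighted α f z * (α / 2 + E z.1 z.2.1 / (2 * θ)) +
      weightedGrad α F 1 z - weightedGrad α f 0 z| ≤
      |α / 2 + E z.1 z.2.1 / (2 * θ)| * |weighted α f z| +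
        |weightedGrad α F 1 z| + |weightedGrad α f 0 z| :=
    (abs_sub _ _).trans (add_le_add_left (htri _ _ _) _)
  simp only [gradSource_eq α θ u hE, Fin.sum_univ_four]
  simp only [phaseBasis, Fin.isValue, Matrix.cons_val_zero, one_mul, Prod.fst_zero, zero_mul,
    add_zero, zero_add, Matrix.cons_val_one, Matrix.cons_val, mul_zero, sub_zero]
  linarith [abs_nonneg (weightedGrad α f 2 z), abs_nonneg (weightedGrad α f 3 z)]

end WeightedGradient

/-! ### The weighted energy -/

section EnergyGrowth

variable {α θ u R₀ : ℝ}

/-- The constant `C₀` of the energy estimate. -/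
noncomputable def energyGrowthRate (α θ u R₀ : ℝ) : ℝ :=
  3 / 2 * α * |R₀| + α / 2 * |u| + α / 2 + 1 / (2 * θ) + 3

lemma energyGrowthRate_pos (hα : 0 < α) (hθ : 0 < θ) (u R₀ : ℝ) :
    0 < energyGrowthRate α θ u R₀ := by
  unfold energyGrowthRate
  positivity

-- The weight contributes `αv`, and the smallness of the field makes the terms linear in `v` that
-- come from it at most `α|v|/2`; half of the damping survives.
lemma growthRate_le_energyGrowthRate_sub_damping {v e e' : ℝ} (hα : 0 < α) (hθ : 0 < θ)
    (hv : v ≤ R₀) (he : |e| + |e'| ≤ min 1 (α * θ / 2)) :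
    2 * (α / 2 * v + (v - u) / (2 * θ) * e) +
        (|(v - u) / (2 * θ) * e'| + |α / 2 + e / (2 * θ)|) + 2 * 1 + 1 ≤
      energyGrowthRate α θ u R₀ - α / 2 * max (-v) 0 := by
  obtain ⟨he₁, he₂⟩ := le_min_iff.1 he
  have h2θ : |2 * θ| = 2 * θ := abs_of_pos (by linarith)
  have hfield : (v - u) / (2 * θ) * e ≤ |v - u| / (2 * θ) * |e| := by
    refine (le_abs_self _).trans_eq ?_
    rw [abs_mul, abs_div, h2θ]
  have hfield' : |(v - u) / (2 * θ) * e'| = |v - u| / (2 * θ) * |e'| := by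
    rw [abs_mul, abs_div, h2θ]
  have hweight : |α / 2 + e / (2 * θ)| ≤ α / 2 + 1 / (2 * θ) := by
    refine (abs_add_le _ _).trans ?_
    rw [abs_of_pos (half_pos hα), abs_div, h2θ]
    gcongr
    linarith [abs_nonneg e']
  have hsmall : |v - u| / (2 * θ) * (2 * |e| + |e'|) ≤ α / 2 * (|v| + |u|) :=
    calc |v - u| / (2 * θ) * (2 * |e| + |e'|)
        ≤ |v - u| / (2 * θ) * (2 * (α * θ / 2)) := by
          gcongr
          linarith [abs_nonneg e']
      _ = α / 2 * |v - u| := by field_simp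
      _ ≤ α / 2 * (|v| + |u|) := by gcongr; exact abs_sub v u
  have hR₀ : α * v ≤ α * |R₀| := by
    gcongr
    exact hv.trans (le_abs_self R₀)
  rw [hfield', energyGrowthRate]
  rcases le_total v 0 with hv₀ | hv₀
  · rw [max_eq_left (by linarith)]
    rw [abs_of_nonpos hv₀] at hsmall
    have : 0 ≤ α * |R₀| := by positivity
    linarith
  · rw [max_eq_right (by linarith)]
    rw [abs_of_nonneg hv₀] at hsmall
    linarith

end EnergyGrowth

section WeightedEnergy

variable {α θ u R₀ T : ℝ} {E : ℝ → ℝ → ℝ} {f F : ℝ → ℝ → ℝ × ℝ × ℝ → ℝ}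

/-- The energy density `|e^{αx/2} f|² + |∇_{x,ξ}(e^{αx/2} f)|²`, with the `ℓ¹` norm of the gradient,
which is dual to the sup norm of `ℝ × ℝ × ℝ × ℝ`. -/
noncomputable def weightedEnergy (α : ℝ) (f : ℝ → ℝ → ℝ × ℝ × ℝ → ℝ) :
    ℝ × ℝ × ℝ × ℝ × ℝ → ℝ :=
  jetEnergy (weighted α f) (weightedGrad α f)

lemma weightedEnergy_nonneg (α : ℝ) (f : ℝ → ℝ → ℝ × ℝ × ℝ → ℝ) (z : ℝ × ℝ × ℝ × ℝ × ℝ) :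
    0 ≤ weightedEnergy α f z :=
  jetEnergy_nonneg _ _ z

lemma continuous_weightedEnergy (α : ℝ)
    (hf : ContDiff ℝ 1 fun p : ℝ × ℝ × (ℝ × ℝ × ℝ) => f p.1 p.2.1 p.2.2) :
    Continuous (weightedEnergy α f) :=
  continuous_jetEnergy (contDiff_weighted α hf).continuous (continuous_weightedGrad α hf)

lemma weightedEnergy_eq_sq_add_norm_fderiv_sq (α : ℝ)
    (hf : ContDiff ℝ 1 fun p : ℝ × ℝ × (ℝ × ℝ × ℝ) => f p.1 p.2.1 p.2.2) (t x : ℝ)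
    (ξ : ℝ × ℝ × ℝ) :
    weightedEnergy α f (t, x, ξ) = (exp (α * x / 2) * f t x ξ) ^ 2 +
      ‖fderiv ℝ (fun p : ℝ × (ℝ × ℝ × ℝ) => exp (α * p.1 / 2) * f t p.1 p.2) (x, ξ)‖ ^ 2 := by
  have hslice : fderiv ℝ (fun p : ℝ × (ℝ × ℝ × ℝ) => exp (α * p.1 / 2) * f t p.1 p.2) (x, ξ) =
      (fderiv ℝ (weighted α f) (t, x, ξ)).comp (.inr ℝ ℝ (ℝ × ℝ × ℝ × ℝ)) :=
    (((contDiff_weighted α hf).differentiable one_ne_zero (t, x, ξ)).hasFDerivAt.comp (x, ξ)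
      (hasFDerivAt_prodMk_right t (x, ξ))).fderiv
  rw [hslice, norm_eq_sum_abs_apply_basis, weightedEnergy, jetEnergy, Fin.sum_univ_four]
  simp only [add_assoc]
  rfl

lemma weightedEnergy_eq_zero (α : ℝ)
    (hf : ContDiff ℝ 1 fun p : ℝ × ℝ × (ℝ × ℝ × ℝ) => f p.1 p.2.1 p.2.2) {t x : ℝ}
    {ξ : ℝ × ℝ × ℝ} (h₀ : f t x ξ = 0)
    (h₁ : fderiv ℝ (fun p : ℝ × (ℝ × ℝ × ℝ) => f t p.1 p.2) (x, ξ) = 0) :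
    weightedEnergy α f (t, x, ξ) = 0 := by
  have hft : DifferentiableAt ℝ (fun p : ℝ × (ℝ × ℝ × ℝ) => f t p.1 p.2) (x, ξ) :=
    (hf.differentiable one_ne_zero (t, x, ξ)).comp (x, ξ) (by fun_prop)
  rw [weightedEnergy_eq_sq_add_norm_fderiv_sq α hf, fderiv_fun_mul (by fun_prop) hft, h₀, h₁]
  simp

lemma weightedEnergy_eq_zero_of_velocity (α : ℝ)
    (hf : ContDiff ℝ 1 fun p : ℝ × ℝ × (ℝ × ℝ × ℝ) => f p.1 p.2.1 p.2.2) {t x : ℝ}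
    (hsupp : ∀ y > 0, ∀ ξ : ℝ × ℝ × ℝ, f t y ξ ≠ 0 → ξ.1 ≤ R₀) (hx : 0 < x) {ξ : ℝ × ℝ × ℝ}
    (hξ : R₀ < ξ.1) : weightedEnergy α f (t, x, ξ) = 0 := by
  have hzero : ∀ y > 0, ∀ η : ℝ × ℝ × ℝ, R₀ < η.1 → f t y η = 0 := fun y hy η hη =>
    by_contra fun hne => hη.not_ge (hsupp y hy η hne)
  have hopen : IsOpen (Ioi 0 ×ˢ Ioi R₀ ×ˢ univ : Set (ℝ × ℝ × ℝ × ℝ)) :=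
    isOpen_Ioi.prod (isOpen_Ioi.prod isOpen_univ)
  have hlocal : (fun p : ℝ × (ℝ × ℝ × ℝ) => f t p.1 p.2) =ᶠ[nhds (x, ξ)] fun _ => 0 := by
    filter_upwards [hopen.mem_nhds ⟨hx, hξ, mem_univ ξ.2⟩] with p hp
    exact hzero p.1 hp.1 p.2 hp.2.1
  exact weightedEnergy_eq_zero α hf (hzero x hx ξ hξ) (by simp [hlocal.fderiv_eq])

lemma fderiv_smoothJetEnergy_weighted_le (hα : 0 < α) (hθ : 0 < θ)
    (hE : ContDiff ℝ 1 fun p : ℝ × ℝ => E p.1 p.2)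
    (hEs : ∀ t ∈ Ioo 0 T, ∀ x > 0, |E t x| + |deriv (E t) x| ≤ min 1 (α * θ / 2))
    (hF : ContDiff ℝ 1 fun p : ℝ × ℝ × (ℝ × ℝ × ℝ) => F p.1 p.2.1 p.2.2)
    (hf : ContDiff ℝ 2 fun p : ℝ × ℝ × (ℝ × ℝ × ℝ) => f p.1 p.2.1 p.2.2)
    (heq : ∀ t ∈ Ioo 0 T, ∀ x > 0, ∀ ξ, VlasovEquation θ u E f F t x ξ)
    (hsupp : ∀ t ∈ Ioo 0 T, ∀ x > 0, ∀ ξ : ℝ × ℝ × ℝ, f t x ξ ≠ 0 → ξ.1 ≤ R₀)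
    {ε t x : ℝ} (hε : 0 < ε) (ht : t ∈ Ioo 0 T) (hx : 0 < x) (ξ : ℝ × ℝ × ℝ) :
    fderiv ℝ (smoothJetEnergy ε (weighted α f) (weightedGrad α f)) (t, x, ξ)
        (vlasovField E (t, x, ξ)) ≤
      (energyGrowthRate α θ u R₀ - α / 2 * max (-ξ.1) 0) * weightedEnergy α f (t, x, ξ) +
        weightedEnergy α F (t, x, ξ) +
        ε * (4 * Fintype.card (Fin 4) * |growthRate α θ u E (t, x, ξ)| *
          ∑ i, |weightedGrad α f i (t, x, ξ)|) := by
  have hEx : |deriv (E t) x| ≤ 1 := by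
    linarith [hEs t ht x hx, min_le_left 1 (α * θ / 2), abs_nonneg (E t x)]
  have hdiff : DifferentiableAt ℝ (weighted α f) (t, x, ξ) :=
    (contDiff_weighted α hf).differentiable two_ne_zero _
  refine (fderiv_smoothJetEnergy_le hε (by positivity) zero_le_one hdiff
    (fun i => (contDiff_weightedGrad α hf i).differentiable one_ne_zero _)
    ((heq t ht x hx ξ).fderiv_weighted (hf.differentiable two_ne_zero) α)
    (fderiv_weightedGrad_vlasovField hE hF hf heq ht hx ξ)
    (sum_abs_gradSource_le α θ u hE f F hEx)).trans ?_
  refine add_le_add_left (add_le_add_left ?_ _) _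
  rcases le_or_gt ξ.1 R₀ with hξ | hξ
  · exact mul_le_mul_of_nonneg_right
      (growthRate_le_energyGrowthRate_sub_damping hα hθ hξ (hEs t ht x hx))
      (weightedEnergy_nonneg α f _)
  · have hzero := weightedEnergy_eq_zero_of_velocity α (hf.of_le one_le_two) (hsupp t ht) hx hξ
    rw [hzero, ← weightedEnergy, hzero, mul_zero, mul_zero]

lemma setIntegral_decayingCutoff_mul_weightedEnergy_le {X M : ℝ} {S : Set (ℝ × ℝ)} (hα : 0 < α)
    (hθ : 0 < θ) (hE : ContDiff ℝ 1 fun p : ℝ × ℝ => E p.1 p.2)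
    (hEs : ∀ t ∈ Ioo 0 T, ∀ x > 0, |E t x| + |deriv (E t) x| ≤ min 1 (α * θ / 2))
    (hF : ContDiff ℝ 1 fun p : ℝ × ℝ × (ℝ × ℝ × ℝ) => F p.1 p.2.1 p.2.2)
    (hf : ContDiff ℝ 2 fun p : ℝ × ℝ × (ℝ × ℝ × ℝ) => f p.1 p.2.1 p.2.2)
    (heq : ∀ t ∈ Ioo 0 T, ∀ x > 0, ∀ ξ, VlasovEquation θ u E f F t x ξ)
    (hinflow : ∀ t ∈ Ioo 0 T, ∀ ξ : ℝ × ℝ × ℝ, 0 ≤ ξ.1 →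
      f t 0 ξ = 0 ∧ fderiv ℝ (fun p : ℝ × (ℝ × ℝ × ℝ) => f t p.1 p.2) (0, ξ) = 0)
    (hsupp : ∀ t ∈ Ioo 0 T, ∀ x > 0, ∀ ξ : ℝ × ℝ × ℝ, f t x ξ ≠ 0 → ξ.1 ≤ R₀)
    (hT : 0 ≤ T) (hX : 0 ≤ X) (hM : 0 ≤ M) (hS : Bornology.IsBounded S) (hSm : MeasurableSet S) :
    ∫ q in phaseBox X M S,
        decayingCutoff (energyGrowthRate α θ u R₀) T M X (T, q) * weightedEnergy α f (T, q) ≤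
      (∫ q in phaseBox X M S,
        decayingCutoff (energyGrowthRate α θ u R₀) T M X (0, q) * weightedEnergy α f (0, q)) +
      ∫ z in Ioo 0 T ×ˢ phaseBox X M S, decayingCutoff (energyGrowthRate α θ u R₀) T M X z *
        (weightedEnergy α F z - α / 2 * max (-z.2.2.1) 0 * weightedEnergy α f z) := by
  have hf₁ := hf.of_le one_le_two
  refine setIntegral_decayingCutoff_mul_jetEnergy_le
    (R := fun z => 4 * Fintype.card (Fin 4) * |growthRate α θ u E z| * ∑ i, |weightedGrad α f i z|)
    hE.continuous (contDiff_weighted α hf₁) (contDiff_weightedGrad α hf) (by fun_prop)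
    (continuous_weightedEnergy α hF) ?_ (fun z => by positivity)
    (energyGrowthRate_pos hα hθ u R₀).le hT hX hM hS hSm
    (fun t ht x hx => ?_)
    (fun t ht ξ hξ => weightedEnergy_eq_zero α hf₁ (hinflow t ht ξ hξ).1 (hinflow t ht ξ hξ).2)
    (fun ε hε t ht x hx ξ =>
      fderiv_smoothJetEnergy_weighted_le hα hθ hE hEs hF hf heq hsupp hε ht hx ξ)
  · have hEc := hE.continuous
    have hgrad := continuous_weightedGrad α hf₁
    unfold growthRate
    fun_prop
  · linarith [hEs t ht x hx, min_le_left 1 (α * θ / 2), abs_nonneg (deriv (E t) x)]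

end WeightedEnergy

/-! ### Exhaustion of the half-space -/

section CutoffRemoval

lemma tendsto_setLIntegral_closedBall {Z : Type*} [NormedAddCommGroup Z] [MeasureSpace Z]
    [BorelSpace Z] {h : Z → ENNReal} (hh : Measurable h) (s : Set Z) :
    Tendsto (fun n : ℕ => ∫⁻ z in Metric.closedBall 0 n ∩ s, h z) atTop
      (nhds (∫⁻ z in s, h z)) := by
  have hlim := (aecover_closedBall (μ := volume.restrict s) (x := (0 : Z))
    tendsto_natCast_atTop_atTop).lintegral_tendsto_of_countably_generated hh.aemeasurable
  simpa only [Measure.restrict_restrict Metric.isClosed_closedBall.measurableSet] using hlim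

section Bounded

variable {Z : Type*} [NormedAddCommGroup Z] [ProperSpace Z] [MeasureSpace Z] [BorelSpace Z]
  [IsFiniteMeasureOnCompacts (volume : Measure Z)] {s B : Set Z} {χ Φ : Z → ℝ}

lemma setLIntegral_ofReal_le_ofReal_setIntegral_mul (hχ : Continuous χ) (hχ₀ : ∀ z, 0 ≤ χ z)
    (hΦ : Continuous Φ) (hΦ₀ : ∀ z, 0 ≤ Φ z) (hB : Bornology.IsBounded B) (hs : MeasurableSet s)
    (hsB : s ⊆ B) (hχs : ∀ z ∈ s, χ z = 1) :
    ∫⁻ z in s, ENNReal.ofReal (Φ z) ≤ ENNReal.ofReal (∫ z in B, χ z * Φ z) := by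
  rw [ofReal_integral_eq_lintegral_ofReal
    (integrableOn_of_continuous_of_isBounded (hχ.fun_mul hΦ) hB)
    (Eventually.of_forall fun z => mul_nonneg (hχ₀ z) (hΦ₀ z))]
  calc ∫⁻ z in s, ENNReal.ofReal (Φ z) = ∫⁻ z in s, ENNReal.ofReal (χ z * Φ z) :=
        setLIntegral_congr_fun hs fun z hz => by simp only [hχs z hz, one_mul]
    _ ≤ ∫⁻ z in B, ENNReal.ofReal (χ z * Φ z) := lintegral_mono_set hsB

lemma ofReal_setIntegral_mul_le_setLIntegral_ofReal (hχ : Continuous χ) (hχ₀ : ∀ z, 0 ≤ χ z)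
    (hχ₁ : ∀ z, χ z ≤ 1) (hΦ : Continuous Φ) (hΦ₀ : ∀ z, 0 ≤ Φ z) (hB : Bornology.IsBounded B)
    (hBs : B ⊆ s) :
    ENNReal.ofReal (∫ z in B, χ z * Φ z) ≤ ∫⁻ z in s, ENNReal.ofReal (Φ z) := by
  rw [ofReal_integral_eq_lintegral_ofReal
    (integrableOn_of_continuous_of_isBounded (hχ.fun_mul hΦ) hB)
    (Eventually.of_forall fun z => mul_nonneg (hχ₀ z) (hΦ₀ z))]
  calc ∫⁻ z in B, ENNReal.ofReal (χ z * Φ z) ≤ ∫⁻ z in B, ENNReal.ofReal (Φ z) :=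
        lintegral_mono fun z => ENNReal.ofReal_le_ofReal (mul_le_of_le_one_left (hΦ₀ z) (hχ₁ z))
    _ ≤ ∫⁻ z in s, ENNReal.ofReal (Φ z) := lintegral_mono_set hBs

end Bounded

/-- The half-space of points with positive first coordinate. -/
def halfSpace (V : Type*) : Set (ℝ × V) := Ioi 0 ×ˢ univ

lemma measurableSet_halfSpace (V : Type*) [MeasurableSpace V] : MeasurableSet (halfSpace V) :=
  measurableSet_Ioi.prod .univ

lemma phaseBox_subset_halfSpace {Y : Type*} (X M : ℝ) (S : Set Y) :
    phaseBox X M S ⊆ halfSpace (ℝ × Y) :=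
  fun _ hq => ⟨hq.1.1, mem_univ _⟩

variable {Y : Type*} [NormedAddCommGroup Y]

lemma exists_transportCutoff_eq_one {T r : ℝ} (hT : 0 ≤ T) (hr : 0 ≤ r) :
    ∃ X ≥ 0, ∃ M ≥ 0, ∀ q ∈ Metric.closedBall 0 r ∩ halfSpace (ℝ × Y),
      q ∈ phaseBox X M (Metric.closedBall 0 r) ∧
        ∀ t ∈ Icc 0 T, transportCutoff M X (t, q) = 1 := by
  have hM : 0 ≤ r + 2 * T + 1 := by positivity
  refine ⟨r + (r + 2 * T + 1) * T + 1, by positivity, r + 2 * T + 1, hM, ?_⟩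
  rintro ⟨x, v, η⟩ ⟨hq, hx, -⟩
  simp only [mem_closedBall_zero_iff, norm_prod_le_iff, Real.norm_eq_abs] at hq
  obtain ⟨hxr, hvr, hη⟩ := hq
  have hMT : 0 ≤ (r + 2 * T + 1) * T := mul_nonneg hM hT
  have hv := abs_le.1 hvr
  refine ⟨⟨⟨hx, ?_⟩, ⟨?_, ?_⟩, mem_closedBall_zero_iff.2 hη⟩, fun t ht => ?_⟩
  · linarith [le_abs_self x]
  · linarith
  · linarith
  have hMt : (r + 2 * T + 1) * t ≤ (r + 2 * T + 1) * T := mul_le_mul_of_nonneg_left ht.2 hM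
  have hvr₂ : v ^ 2 ≤ r ^ 2 := sq_le_sq.2 (hvr.trans (le_abs_self r))
  have hrT : 0 ≤ r * T := mul_nonneg hr hT
  refine transportCutoff_eq_one ?_ ?_
  · linarith [le_abs_self x]
  · linarith

variable [NormedSpace ℝ Y] [ProperSpace Y] [MeasureSpace Y] [BorelSpace Y]
  [IsFiniteMeasureOnCompacts (volume : Measure Y)] {C T : ℝ} {W H d : ℝ × ℝ × ℝ × Y → ℝ}

lemma setIntegral_transportCutoff_mul_add_le {X M : ℝ} {S : Set Y}
    (hW : Continuous W) (hH : Continuous H) (hd : Continuous d) (hS : Bornology.IsBounded S)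
    (hdecay : ∫ q in phaseBox X M S, decayingCutoff C T M X (T, q) * W (T, q) ≤
      (∫ q in phaseBox X M S, decayingCutoff C T M X (0, q) * W (0, q)) +
      ∫ z in Ioo 0 T ×ˢ phaseBox X M S, decayingCutoff C T M X z * (H z - d z * W z)) :
    (∫ q in phaseBox X M S, transportCutoff M X (T, q) * W (T, q)) +
        ∫ z in Ioo 0 T ×ˢ phaseBox X M S,
          transportCutoff M X z * (exp (C * (T - z.1)) * (d z * W z)) ≤
      (∫ q in phaseBox X M S, transportCutoff M X (0, q) * (exp (C * T) * W (0, q))) +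
        ∫ z in Ioo 0 T ×ˢ phaseBox X M S,
          transportCutoff M X z * (exp (C * (T - z.1)) * H z) := by
  have hcyl := (Metric.isBounded_Ioo 0 T).prod (isBounded_phaseBox X M hS)
  have hχ : Continuous (transportCutoff M X : ℝ × ℝ × ℝ × Y → ℝ) :=
    (contDiff_transportCutoff M X).continuous
  simp only [decayingCutoff, sub_self, mul_zero, exp_zero, one_mul, sub_zero] at hdecay
  rw [← le_sub_iff_add_le, add_sub_assoc, ← integral_sub
    (integrableOn_of_continuous_of_isBounded (by fun_prop) hcyl)
    (integrableOn_of_continuous_of_isBounded (by fun_prop) hcyl)]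
  convert hdecay using 4 <;> ring

lemma exists_forall_setLIntegral_closedBall_add_le {r : ℝ} (hT : 0 ≤ T) (hr : 0 ≤ r) :
    ∃ X ≥ 0, ∃ M ≥ 0, ∀ Φ₀ : ℝ × ℝ × Y → ℝ, ∀ Φ : ℝ × ℝ × ℝ × Y → ℝ,
      Continuous Φ₀ → (∀ q, 0 ≤ Φ₀ q) → Continuous Φ → (∀ z, 0 ≤ Φ z) →
      (∫⁻ q in Metric.closedBall 0 r ∩ halfSpace (ℝ × Y), ENNReal.ofReal (Φ₀ q)) +
          ∫⁻ z in Metric.closedBall 0 r ∩ Ioo 0 T ×ˢ halfSpace (ℝ × Y), ENNReal.ofReal (Φ z) ≤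
        ENNReal.ofReal
          ((∫ q in phaseBox X M (Metric.closedBall 0 r), transportCutoff M X (T, q) * Φ₀ q) +
          ∫ z in Ioo 0 T ×ˢ phaseBox X M (Metric.closedBall 0 r),
            transportCutoff M X z * Φ z) := by
  obtain ⟨X, hX, M, hM, hone⟩ := exists_transportCutoff_eq_one (Y := Y) hT hr
  refine ⟨X, hX, M, hM, fun Φ₀ Φ hΦ₀ hΦ₀pos hΦ hΦpos => ?_⟩
  have hball (z : ℝ × ℝ × ℝ × Y) (hz : z ∈ Metric.closedBall 0 r ∩ Ioo 0 T ×ˢ halfSpace (ℝ × Y)) :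
      z.2 ∈ Metric.closedBall 0 r ∩ halfSpace (ℝ × Y) :=
    ⟨mem_closedBall_zero_iff.2 ((norm_snd_le z).trans (mem_closedBall_zero_iff.1 hz.1)), hz.2.2⟩
  have hbox : Bornology.IsBounded (phaseBox X M (Metric.closedBall (0 : Y) r)) :=
    isBounded_phaseBox X M Metric.isBounded_closedBall
  have hχ : Continuous (transportCutoff M X : ℝ × ℝ × ℝ × Y → ℝ) :=
    (contDiff_transportCutoff M X).continuous
  have hχ₀ := transportCutoff_nonneg (Y := Y) M X
  rw [ENNReal.ofReal_add (integral_nonneg fun q => mul_nonneg (hχ₀ _) (hΦ₀pos q))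
    (integral_nonneg fun z => mul_nonneg (hχ₀ z) (hΦpos z))]
  exact add_le_add
    (setLIntegral_ofReal_le_ofReal_setIntegral_mul (χ := fun q => transportCutoff M X (T, q))
      (by fun_prop) (fun q => hχ₀ _) hΦ₀ hΦ₀pos hbox
      (Metric.isClosed_closedBall.measurableSet.inter (measurableSet_halfSpace _))
      (fun q hq => (hone q hq).1) (fun q hq => (hone q hq).2 T (right_mem_Icc.2 hT)))
    (setLIntegral_ofReal_le_ofReal_setIntegral_mul hχ hχ₀ hΦ hΦpos
      ((Metric.isBounded_Ioo 0 T).prod hbox)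
      (Metric.isClosed_closedBall.measurableSet.inter
        (measurableSet_Ioo.prod (measurableSet_halfSpace _)))
      (fun z hz => ⟨hz.2.1, (hone z.2 (hball z hz)).1⟩)
      (fun z hz => (hone z.2 (hball z hz)).2 z.1 (Ioo_subset_Icc_self hz.2.1)))

lemma ofReal_setIntegral_transportCutoff_mul_add_le {X M : ℝ} {S : Set Y} {Φ₀ : ℝ × ℝ × Y → ℝ}
    {Φ : ℝ × ℝ × ℝ × Y → ℝ} (hΦ₀ : Continuous Φ₀) (hΦ₀pos : ∀ q, 0 ≤ Φ₀ q) (hΦ : Continuous Φ)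
    (hΦpos : ∀ z, 0 ≤ Φ z) (hS : Bornology.IsBounded S) (t : ℝ) :
    ENNReal.ofReal ((∫ q in phaseBox X M S, transportCutoff M X (t, q) * Φ₀ q) +
        ∫ z in Ioo 0 T ×ˢ phaseBox X M S, transportCutoff M X z * Φ z) ≤
      (∫⁻ q in halfSpace (ℝ × Y), ENNReal.ofReal (Φ₀ q)) +
        ∫⁻ z in Ioo 0 T ×ˢ halfSpace (ℝ × Y), ENNReal.ofReal (Φ z) := by
  have hbox := isBounded_phaseBox X M hS
  have hχ : Continuous (transportCutoff M X : ℝ × ℝ × ℝ × Y → ℝ) :=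
    (contDiff_transportCutoff M X).continuous
  have hχ₀ := transportCutoff_nonneg (Y := Y) M X
  have hχ₁ := transportCutoff_le_one (Y := Y) M X
  exact ENNReal.ofReal_add_le.trans (add_le_add
    (ofReal_setIntegral_mul_le_setLIntegral_ofReal (χ := fun q => transportCutoff M X (t, q))
      (by fun_prop) (fun q => hχ₀ _) (fun q => hχ₁ _) hΦ₀ hΦ₀pos hbox
      (phaseBox_subset_halfSpace X M S))
    (ofReal_setIntegral_mul_le_setLIntegral_ofReal hχ hχ₀ hχ₁ hΦ hΦpos
      ((Metric.isBounded_Ioo 0 T).prod hbox) (prod_mono_right (phaseBox_subset_halfSpace X M S))))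

lemma setLIntegral_closedBall_add_le_of_decayingCutoff (hW : Continuous W) (hW₀ : ∀ z, 0 ≤ W z)
    (hH : Continuous H) (hH₀ : ∀ z, 0 ≤ H z) (hd : Continuous d) (hd₀ : ∀ z, 0 ≤ d z) (hT : 0 ≤ T)
    (hdecay : ∀ X ≥ 0, ∀ M ≥ 0, ∀ S : Set Y, Bornology.IsBounded S → MeasurableSet S →
      ∫ q in phaseBox X M S, decayingCutoff C T M X (T, q) * W (T, q) ≤
        (∫ q in phaseBox X M S, decayingCutoff C T M X (0, q) * W (0, q)) +
        ∫ z in Ioo 0 T ×ˢ phaseBox X M S, decayingCutoff C T M X z * (H z - d z * W z))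
    {r : ℝ} (hr : 0 ≤ r) :
    (∫⁻ q in Metric.closedBall 0 r ∩ halfSpace (ℝ × Y), ENNReal.ofReal (W (T, q))) +
        ∫⁻ z in Metric.closedBall 0 r ∩ Ioo 0 T ×ˢ halfSpace (ℝ × Y),
          ENNReal.ofReal (exp (C * (T - z.1)) * (d z * W z)) ≤
      (∫⁻ q in halfSpace (ℝ × Y), ENNReal.ofReal (exp (C * T) * W (0, q))) +
        ∫⁻ z in Ioo 0 T ×ˢ halfSpace (ℝ × Y), ENNReal.ofReal (exp (C * (T - z.1)) * H z) := by
  obtain ⟨X, hX, M, hM, hlower⟩ := exists_forall_setLIntegral_closedBall_add_le (Y := Y) hT hr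
  have hS : Bornology.IsBounded (Metric.closedBall (0 : Y) r) := Metric.isBounded_closedBall
  refine (hlower (fun q => W (T, q)) (fun z => exp (C * (T - z.1)) * (d z * W z)) (by fun_prop)
    (fun q => hW₀ _) (by fun_prop)
    (fun z => mul_nonneg (exp_pos _).le (mul_nonneg (hd₀ z) (hW₀ z)))).trans ?_
  refine (ENNReal.ofReal_le_ofReal (setIntegral_transportCutoff_mul_add_le hW hH hd hS
    (hdecay X hX M hM _ hS Metric.isClosed_closedBall.measurableSet))).trans ?_
  exact ofReal_setIntegral_transportCutoff_mul_add_le (by fun_prop)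
    (fun q => mul_nonneg (exp_pos _).le (hW₀ _)) (by fun_prop)
    (fun z => mul_nonneg (exp_pos _).le (hH₀ z)) hS 0

lemma setLIntegral_halfSpace_add_le_of_decayingCutoff (hW : Continuous W) (hW₀ : ∀ z, 0 ≤ W z)
    (hH : Continuous H) (hH₀ : ∀ z, 0 ≤ H z) (hd : Continuous d) (hd₀ : ∀ z, 0 ≤ d z) (hT : 0 ≤ T)
    (hdecay : ∀ X ≥ 0, ∀ M ≥ 0, ∀ S : Set Y, Bornology.IsBounded S → MeasurableSet S →
      ∫ q in phaseBox X M S, decayingCutoff C T M X (T, q) * W (T, q) ≤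
        (∫ q in phaseBox X M S, decayingCutoff C T M X (0, q) * W (0, q)) +
        ∫ z in Ioo 0 T ×ˢ phaseBox X M S, decayingCutoff C T M X z * (H z - d z * W z)) :
    (∫⁻ q in halfSpace (ℝ × Y), ENNReal.ofReal (W (T, q))) +
        ∫⁻ z in Ioo 0 T ×ˢ halfSpace (ℝ × Y),
          ENNReal.ofReal (exp (C * (T - z.1)) * (d z * W z)) ≤
      (∫⁻ q in halfSpace (ℝ × Y), ENNReal.ofReal (exp (C * T) * W (0, q))) +
        ∫⁻ z in Ioo 0 T ×ˢ halfSpace (ℝ × Y), ENNReal.ofReal (exp (C * (T - z.1)) * H z) :=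
  le_of_tendsto'
    ((tendsto_setLIntegral_closedBall
      (h := fun q => ENNReal.ofReal (W (T, q))) (by fun_prop) _).add
      (tendsto_setLIntegral_closedBall
        (h := fun z => ENNReal.ofReal (exp (C * (T - z.1)) * (d z * W z))) (by fun_prop) _))
    fun n => setLIntegral_closedBall_add_le_of_decayingCutoff hW hW₀ hH hH₀ hd hd₀ hT hdecay
      n.cast_nonneg

end CutoffRemoval

section IteratedIntegrals

section Tonelli

variable {V : Type*} [MeasureSpace V] [SFinite (volume : Measure V)]

lemma setLIntegral_halfSpace {h : ℝ × V → ENNReal} (hh : Measurable h) :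
    ∫⁻ q in halfSpace V, h q = ∫⁻ x in Ioi 0, ∫⁻ ξ, h (x, ξ) := by
  rw [halfSpace, Measure.volume_eq_prod, setLIntegral_prod _ hh.aemeasurable, Measure.restrict_univ]

lemma setLIntegral_Ioo_prod_halfSpace {h : ℝ × ℝ × V → ENNReal} (hh : Measurable h) (T : ℝ) :
    ∫⁻ z in Ioo 0 T ×ˢ halfSpace V, h z =
      ∫⁻ t in Ioc 0 T, ∫⁻ x in Ioi 0, ∫⁻ ξ, h (t, x, ξ) := by
  rw [Measure.volume_eq_prod, setLIntegral_prod _ hh.aemeasurable,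
    Measure.restrict_congr_set Ioo_ae_eq_Ioc]
  exact lintegral_congr fun t => setLIntegral_halfSpace (hh.comp measurable_prodMk_left)

end Tonelli

variable {f : ℝ → ℝ → ℝ × ℝ × ℝ → ℝ}

lemma wH1_eq_lintegral_weightedEnergy (α : ℝ)
    (hf : ContDiff ℝ 1 fun p : ℝ × ℝ × (ℝ × ℝ × ℝ) => f p.1 p.2.1 p.2.2) (t : ℝ) :
    wH1 α (f t) = ∫⁻ x in Ioi 0, ∫⁻ ξ, ENNReal.ofReal (weightedEnergy α f (t, x, ξ)) := by
  simp only [weightedEnergy_eq_sq_add_norm_fderiv_sq α hf, wH1]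

lemma wDiss_eq_lintegral_max_mul_weightedEnergy (α : ℝ)
    (hf : ContDiff ℝ 1 fun p : ℝ × ℝ × (ℝ × ℝ × ℝ) => f p.1 p.2.1 p.2.2) (t : ℝ) :
    wDiss α (f t) = ∫⁻ x in Ioi 0, ∫⁻ ξ : ℝ × ℝ × ℝ,
      ENNReal.ofReal (max (-ξ.1) 0 * weightedEnergy α f (t, x, ξ)) := by
  refine lintegral_congr fun x => ?_
  have hsupport : (Function.support fun ξ : ℝ × ℝ × ℝ =>
      ENNReal.ofReal (max (-ξ.1) 0 * weightedEnergy α f (t, x, ξ))) ⊆ {ξ | ξ.1 < 0} := by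
    refine Function.support_subset_iff'.2 fun ξ hξ => ?_
    rw [max_eq_right (neg_nonpos.2 (not_lt.1 hξ)), zero_mul, ENNReal.ofReal_zero]
  rw [← setLIntegral_eq_of_support_subset hsupport]
  refine setLIntegral_congr_fun (measurableSet_lt measurable_fst measurable_const) fun ξ hξ => ?_
  have hneg : ξ.1 < 0 := hξ
  simp only [weightedEnergy_eq_sq_add_norm_fderiv_sq α hf, max_eq_left (neg_nonneg.2 hneg.le),
    abs_of_neg hneg]

lemma lintegral_lintegral_ofReal_const_mul {X Y : Type*} [MeasurableSpace X] [MeasurableSpace Y]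
    {μ : Measure X} {ν : Measure Y} {c : ℝ} (hc : 0 ≤ c) (G : X → Y → ℝ) :
    ∫⁻ x, ∫⁻ y, ENNReal.ofReal (c * G x y) ∂ν ∂μ =
      ENNReal.ofReal c * ∫⁻ x, ∫⁻ y, ENNReal.ofReal (G x y) ∂ν ∂μ := by
  simp only [ENNReal.ofReal_mul hc, lintegral_const_mul' _ _ ENNReal.ofReal_ne_top]

lemma setLIntegral_halfSpace_weightedEnergy {c : ℝ} (hc : 0 ≤ c)
    (hf : ContDiff ℝ 1 fun p : ℝ × ℝ × (ℝ × ℝ × ℝ) => f p.1 p.2.1 p.2.2) (α t : ℝ) :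
    ∫⁻ q in halfSpace (ℝ × ℝ × ℝ), ENNReal.ofReal (c * weightedEnergy α f (t, q)) =
      ENNReal.ofReal c * wH1 α (f t) := by
  have hW := continuous_weightedEnergy α hf
  rw [setLIntegral_halfSpace (by fun_prop), lintegral_lintegral_ofReal_const_mul hc,
    wH1_eq_lintegral_weightedEnergy α hf]

lemma setLIntegral_Ioo_prod_halfSpace_weightedEnergy
    (hf : ContDiff ℝ 1 fun p : ℝ × ℝ × (ℝ × ℝ × ℝ) => f p.1 p.2.1 p.2.2) (α C T : ℝ) :
    ∫⁻ z in Ioo 0 T ×ˢ halfSpace (ℝ × ℝ × ℝ),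
        ENNReal.ofReal (exp (C * (T - z.1)) * weightedEnergy α f z) =
      ∫⁻ τ in Ioc 0 T, ENNReal.ofReal (exp (C * (T - τ))) * wH1 α (f τ) := by
  have hW := continuous_weightedEnergy α hf
  rw [setLIntegral_Ioo_prod_halfSpace (by fun_prop)]
  simp only [lintegral_lintegral_ofReal_const_mul (exp_pos _).le,
    wH1_eq_lintegral_weightedEnergy α hf]

lemma setLIntegral_Ioo_prod_halfSpace_damping {κ : ℝ} (hκ : 0 ≤ κ)
    (hf : ContDiff ℝ 1 fun p : ℝ × ℝ × (ℝ × ℝ × ℝ) => f p.1 p.2.1 p.2.2) (α C T : ℝ) :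
    ∫⁻ z in Ioo 0 T ×ˢ halfSpace (ℝ × ℝ × ℝ),
        ENNReal.ofReal (exp (C * (T - z.1)) * (κ * max (-z.2.2.1) 0 * weightedEnergy α f z)) =
      ENNReal.ofReal κ *
        ∫⁻ τ in Ioc 0 T, ENNReal.ofReal (exp (C * (T - τ))) * wDiss α (f τ) := by
  have hW := continuous_weightedEnergy α hf
  rw [setLIntegral_Ioo_prod_halfSpace (by fun_prop),
    ← lintegral_const_mul' _ _ ENNReal.ofReal_ne_top]
  simp only [mul_assoc κ, mul_left_comm _ κ, lintegral_lintegral_ofReal_const_mul hκ,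
    lintegral_lintegral_ofReal_const_mul (exp_pos _).le,
    wDiss_eq_lintegral_max_mul_weightedEnergy α hf]

end IteratedIntegrals

theorem linear_energy_estimate_general {α θ u R₀ T₀ : ℝ} (hα : 0 < α) (hθ : 0 < θ)
    {E : ℝ → ℝ → ℝ} (hE : ContDiff ℝ 1 fun p : ℝ × ℝ => E p.1 p.2)
    (hEs : ∀ t ∈ Ioo 0 T₀, ∀ x > 0, |E t x| + |deriv (E t) x| ≤ min 1 (α * θ / 2))
    {F : ℝ → ℝ → ℝ × ℝ × ℝ → ℝ}
    (hF : ContDiff ℝ 1 fun p : ℝ × ℝ × (ℝ × ℝ × ℝ) => F p.1 p.2.1 p.2.2)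
    {f : ℝ → ℝ → ℝ × ℝ × ℝ → ℝ}
    (hf : ContDiff ℝ 2 fun p : ℝ × ℝ × (ℝ × ℝ × ℝ) => f p.1 p.2.1 p.2.2)
    (heq : ∀ t ∈ Ioo 0 T₀, ∀ x > 0, ∀ ξ, VlasovEquation θ u E f F t x ξ)
    (hinflow : ∀ t ∈ Ioo 0 T₀, ∀ ξ : ℝ × ℝ × ℝ, 0 ≤ ξ.1 →
      f t 0 ξ = 0 ∧ fderiv ℝ (fun p : ℝ × (ℝ × ℝ × ℝ) => f t p.1 p.2) (0, ξ) = 0)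
    (hsupp : ∀ t ∈ Ioo 0 T₀, ∀ x > 0, ∀ ξ : ℝ × ℝ × ℝ, f t x ξ ≠ 0 → ξ.1 ≤ R₀)
    {t : ℝ} (ht : t ∈ Icc 0 T₀) :
    wH1 α (f t) + ENNReal.ofReal (α / 2) * ∫⁻ τ in Ioc 0 t,
        ENNReal.ofReal (exp (energyGrowthRate α θ u R₀ * (t - τ))) * wDiss α (f τ) ≤
      ENNReal.ofReal (exp (energyGrowthRate α θ u R₀ * t)) * wH1 α (f 0) +
        ∫⁻ τ in Ioc 0 t,
          ENNReal.ofReal (exp (energyGrowthRate α θ u R₀ * (t - τ))) * wH1 α (F τ) := by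
  have hf₁ := hf.of_le one_le_two
  have hsub : ∀ τ ∈ Ioo 0 t, τ ∈ Ioo 0 T₀ := fun τ hτ => ⟨hτ.1, hτ.2.trans_le ht.2⟩
  have hglobal := setLIntegral_halfSpace_add_le_of_decayingCutoff
    (d := fun z : ℝ × ℝ × ℝ × ℝ × ℝ => α / 2 * max (-z.2.2.1) 0)
    (continuous_weightedEnergy α hf₁) (weightedEnergy_nonneg α f)
    (continuous_weightedEnergy α hF) (weightedEnergy_nonneg α F) (by fun_prop)
    (fun z => by positivity) ht.1 fun X hX M hM S hS hSm =>
      setIntegral_decayingCutoff_mul_weightedEnergy_le hα hθ hE (fun τ hτ => hEs τ (hsub τ hτ))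
        hF hf (fun τ hτ => heq τ (hsub τ hτ)) (fun τ hτ => hinflow τ (hsub τ hτ))
        (fun τ hτ => hsupp τ (hsub τ hτ)) ht.1 hX hM hS hSm
  have hfinal := setLIntegral_halfSpace_weightedEnergy zero_le_one hf₁ α t
  simp only [one_mul, ENNReal.ofReal_one] at hfinal
  rwa [hfinal, setLIntegral_Ioo_prod_halfSpace_damping (half_pos hα).le hf₁,
    setLIntegral_halfSpace_weightedEnergy (exp_pos _).le hf₁,
    setLIntegral_Ioo_prod_halfSpace_weightedEnergy hF] at hglobal

/-- weighted `H¹` energy estimate for the linearized Vlasov equation on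
the half-line with completely absorbing boundary condition; `δ₀` depends only on
`α, θ∞`, and `C₀` on `α, θ∞, u∞, R₀` but not on `L₀`. -/
theorem linear_energy_estimate :
    ∀ α θ : ℝ, 0 < α → 0 < θ →
    ∃ δ₀ : ℝ, 0 < δ₀ ∧ δ₀ ≤ 1 ∧
    ∀ u R₀ : ℝ, 0 < R₀ →
    ∃ C₀ : ℝ, 0 < C₀ ∧
    ∀ L₀ T₀ : ℝ, 0 < L₀ → 0 < T₀ →
    ∀ E : ℝ → ℝ → ℝ, ContDiff ℝ 1 (fun p : ℝ × ℝ => E p.1 p.2) →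
    (∀ t ∈ Set.Icc 0 T₀, ∀ x ≥ (0:ℝ), |E t x| + |deriv (E t) x| ≤ δ₀) →
    ∀ F : ℝ → ℝ → ℝ × ℝ × ℝ → ℝ,
      ContDiff ℝ 1 (fun p : ℝ × ℝ × (ℝ × ℝ × ℝ) => F p.1 p.2.1 p.2.2) →
    ∀ f : ℝ → ℝ → ℝ × ℝ × ℝ → ℝ,
      ContDiff ℝ 2 (fun p : ℝ × ℝ × (ℝ × ℝ × ℝ) => f p.1 p.2.1 p.2.2) →
    (∀ t ∈ Set.Ioo 0 T₀, ∀ x > (0:ℝ), ∀ ξ : ℝ × ℝ × ℝ,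
      deriv (fun s => f s x ξ) t + ξ.1 * deriv (fun y => f t y ξ) x
        + E t x * deriv (fun v => f t x (v, ξ.2)) ξ.1
        - ((ξ.1 - u) / (2*θ)) * E t x * f t x ξ
        = F t x ξ) →
    (∃ U : Set (ℝ × (ℝ × ℝ × ℝ)), IsOpen U ∧
      {p : ℝ × (ℝ × ℝ × ℝ) | p.1 = 0 ∧ 0 ≤ p.2.1} ⊆ U ∧
      ∀ t ∈ Set.Icc 0 T₀, ∀ p ∈ U, f t p.1 p.2 = 0) →
    (∀ t x, ∀ ξ : ℝ × ℝ × ℝ, f t x ξ ≠ 0 → -L₀ ≤ ξ.1 ∧ ξ.1 ≤ R₀) →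
    (∀ t ∈ Set.Icc 0 T₀, wH1 α (f t) < ⊤) →
    (∀ t ∈ Set.Icc 0 T₀, wH1 α (F t) < ⊤) →
    (∫⁻ τ in Set.Ioc 0 T₀, wH1 α (F τ)) < ⊤ →
    ∀ t ∈ Set.Icc 0 T₀,
      wH1 α (f t) + ENNReal.ofReal (α/2) *
          ∫⁻ τ in Set.Ioc 0 t, ENNReal.ofReal (Real.exp (C₀ * (t - τ))) * wDiss α (f τ)
        ≤ ENNReal.ofReal (Real.exp (C₀ * t)) * wH1 α (f 0)
          + ∫⁻ τ in Set.Ioc 0 t, ENNReal.ofReal (Real.exp (C₀ * (t - τ))) * wH1 α (F τ) := by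
  intro α θ hα hθ
  refine ⟨min 1 (α * θ / 2), by positivity, min_le_left _ _, fun u R₀ _ =>
    ⟨energyGrowthRate α θ u R₀, energyGrowthRate_pos hα hθ u R₀, ?_⟩⟩
  rintro L₀ T₀ - - E hE hEs F hF f hf heq ⟨U, hU, hinU, hfU⟩ hsupp - - - t ht
  refine linear_energy_estimate_general hα hθ hE
    (fun τ hτ x hx => hEs τ (Ioo_subset_Icc_self hτ) x hx.le) hF hf heq (fun τ hτ ξ hξ => ?_)
    (fun τ _ x _ ξ hne => (hsupp τ x ξ hne).2) ht
  have hzero := hfU τ (Ioo_subset_Icc_self hτ)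
  have hmem : (0, ξ) ∈ U := hinU ⟨rfl, hξ⟩
  have hlocal : (fun p : ℝ × (ℝ × ℝ × ℝ) => f τ p.1 p.2) =ᶠ[nhds (0, ξ)] fun _ => 0 :=
    eventually_of_mem (hU.mem_nhds hmem) hzero
  exact ⟨hzero _ hmem, by simp [hlocal.fderiv_eq]⟩
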